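/- There exists a constant ε > 0 such that for every large enough integer n the following holds: for every spanning tree T of K_n with maximum degree Δ(T) ≤ ε·√n, in the unbiased Waiter-Client game on the edge set of K_n whose winning sets are the copies of T in K_n, we have n − 1 ≤ τ_WC(F_T, 1) ≤ n. -/

import Mathlib

open Finset

/-- `WaiterWins board b win t Cl W` means: starting from the position where Client owns the
elements of `Cl` and Waiter owns the elements of `W`, Waiter can force that within the next `t`
rounds of the `b`-biased Waiter-Client game on the board `board` a position is reached in which
the predicate `win` holds of (Client's elements, Waiter's elements).  In each round Waiter offers
`b+1` previously unclaimed board elements (or all remaining unclaimed elements, if fewer than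
`b+1` remain); Client claims exactly one of them, the rest go to Waiter. -/
def WaiterWins {X : Type*} [DecidableEq X] (board : Finset X) (b : ℕ)
    (win : Finset X → Finset X → Prop) :
    ℕ → Finset X → Finset X → Prop
  | 0, Cl, W => win Cl W
  | (t+1), Cl, W => win Cl W ∨
      ∃ O : Finset X, O.Nonempty ∧ O ⊆ board \ (Cl ∪ W) ∧
        O.card = min (b + 1) ((board \ (Cl ∪ W)).card) ∧
        ∀ x ∈ O, WaiterWins board b win t (insert x Cl) (W ∪ O.erase x)

/-- `tauWC board F b` : the smallest number of rounds within which Waiter can force Client's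
elements to contain some member of the winning family `F`, in the `b`-biased Waiter-Client game
on the board `board`. -/
noncomputable def tauWC {X : Type*} [DecidableEq X] (board : Finset X)
    (F : Set (Finset X)) (b : ℕ) : ℕ :=
  sInf {t | WaiterWins board b (fun Cl _ => ∃ A ∈ F, A ⊆ Cl) t ∅ ∅}

/-- The edge set of the complete graph on `Fin n`. -/
def Kedges (n : ℕ) : Finset (Sym2 (Fin n)) :=
  Finset.univ.filter (fun e => ¬ e.IsDiag)

/-- The family of edge sets of copies (in `K_n`) of the spanning subgraph of `K_n` with
edge set `E`: images of `E` under permutations of the vertex set. -/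
def copiesFamily (n : ℕ) (E : Set (Sym2 (Fin n))) : Set (Finset (Sym2 (Fin n))) :=
  {F | ∃ σ : Equiv.Perm (Fin n), (F : Set (Sym2 (Fin n))) = Sym2.map σ '' E}

/-! Waiter embeds `T` vertex by vertex: from an embedded vertex `x` with a missing neighbour he
offers two edges `xu`, `xu'` to free vertices. Either answer extends Client's partial copy, and
after relabelling the free vertices both answers look alike, so no round is wasted. This can only
stall near the end, when the edges from `x` to the few remaining vertices already belong to Waiter.

Since the maximum degree is small, `T` has a long bare path or a branch on at most half of the
vertices with many vertices attached to leaves. In the second case Waiter embeds this branch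
without its leaves while his own edges are still so scattered that no free vertex meets two of
them, then the rest of `T`, and finally the leaves: these give him enough freedom at every step,
and the last leaf takes at most two rounds because it may be exchanged with another one. In the
first case he embeds the beginning of the bare path in this scattered way, then all vertices off
the path, and then fills the path backwards from its far end until one vertex is missing. Its
two edges take at most three rounds, since the missing vertex may instead be placed elsewhere on
the beginning of the path, reversing or rotating an interval of it. Either way at most one round
is lost. -/

/-! ### The game -/

section Game

variable {X : Type*} [DecidableEq X] {board : Finset X} {b t : ℕ}
  {win : Finset X → Finset X → Prop} {C W : Finset X}

theorem WaiterWins.of_win (h : win C W) : WaiterWins board b win t C W := by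
  cases t with
  | zero => exact h
  | succ t => exact Or.inl h

theorem WaiterWins.mono {win' : Finset X → Finset X → Prop} (hwin : ∀ C W, win C W → win' C W)
    (h : WaiterWins board b win t C W) : WaiterWins board b win' t C W := by
  induction t generalizing C W with
  | zero => exact hwin _ _ h
  | succ t ih =>
    rcases h with h | ⟨O, hne, hsub, hcard, hO⟩
    · exact Or.inl (hwin _ _ h)
    · exact Or.inr ⟨O, hne, hsub, hcard, fun x hx => ih (hO x hx)⟩

theorem WaiterWins.offer_pair {e f : X} (hef : e ≠ f) (he : e ∈ board \ (C ∪ W))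
    (hf : f ∈ board \ (C ∪ W)) (win_e : WaiterWins board 1 win t (insert e C) (insert f W))
    (win_f : WaiterWins board 1 win t (insert f C) (insert e W)) :
    WaiterWins board 1 win (t + 1) C W := by
  have hsub : {e, f} ⊆ board \ (C ∪ W) := insert_subset he (singleton_subset_iff.2 hf)
  refine Or.inr ⟨{e, f}, insert_nonempty _ _, hsub, ?_, fun x hx => ?_⟩
  · have := card_le_card hsub
    rw [card_pair hef] at this ⊢
    omega
  · obtain rfl | rfl : x = e ∨ x = f := by simpa using hx
    · rwa [erase_insert (by simpa using hef), union_comm, ← insert_eq]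
    · rwa [pair_comm, erase_insert (by simpa using hef.symm), union_comm, ← insert_eq]

theorem WaiterWins.of_map {Y : Type*} [DecidableEq Y] (φ : X ↪ Y) {win : Finset Y → Finset Y → Prop}
    (h : WaiterWins (board.map φ) b win t (C.map φ) (W.map φ)) :
    WaiterWins board b (fun C W => win (C.map φ) (W.map φ)) t C W := by
  induction t generalizing C W with
  | zero => exact h
  | succ t ih =>
    rcases h with h | ⟨O, hne, hsub, hcard, hO⟩
    · exact Or.inl h
    · rw [← map_union, ← Finset.map_sdiff] at hsub hcard
      obtain ⟨O, hO', rfl⟩ := subset_map_iff.1 hsub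
      refine Or.inr ⟨O, map_nonempty.1 hne, hO', by simpa using hcard, fun x hx => ih ?_⟩
      simpa only [map_insert, map_union, map_erase] using hO (φ x) (mem_map_of_mem φ hx)

theorem WaiterWins.exists_card_le {F : Set (Finset X)}
    (h : WaiterWins board b (fun C _ => ∃ A ∈ F, A ⊆ C) t C W) : ∃ A ∈ F, #A ≤ #C + t := by
  induction t generalizing C W with
  | zero =>
    obtain ⟨A, hA, hsub⟩ := h
    exact ⟨A, hA, card_le_card hsub⟩
  | succ t ih =>
    rcases h with ⟨A, hA, hsub⟩ | ⟨O, ⟨x, hx⟩, -, -, hO⟩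
    · exact ⟨A, hA, (card_le_card hsub).trans (Nat.le_add_right _ _)⟩
    · obtain ⟨A, hA, hcard⟩ := ih (hO x hx)
      exact ⟨A, hA, hcard.trans (by have := card_insert_le x C; omega)⟩

end Game

theorem card_of_mem_copiesFamily {n : ℕ} {T : SimpleGraph (Fin n)} (hT : T.IsTree)
    {A : Finset (Sym2 (Fin n))} (hA : A ∈ copiesFamily n T.edgeSet) : #A = n - 1 := by
  classical
  obtain ⟨σ, hσ⟩ := hA
  have hcard := hT.card_edgeFinset
  rw [← Set.ncard_coe_finset, hσ, Set.ncard_image_of_injective _ (Sym2.map.injective σ.injective),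
    ← SimpleGraph.coe_edgeFinset, Set.ncard_coe_finset]
  rw [Fintype.card_fin] at hcard
  omega

/-! ### Relabelling the vertices -/

section Relabel

variable {V : Type*}

/-- The image of a set of edges under a permutation of the vertices. -/
def relabel (σ : Equiv.Perm V) (E : Finset (Sym2 V)) : Finset (Sym2 V) :=
  E.map σ.toEmbedding.sym2Map

theorem mk_mem_relabel {σ : Equiv.Perm V} {E : Finset (Sym2 V)} {x y : V} :
    s(x, y) ∈ relabel σ E ↔ s(σ.symm x, σ.symm y) ∈ E := by
  have h : s(x, y) = σ.toEmbedding.sym2Map s(σ.symm x, σ.symm y) := by simp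
  rw [relabel, h, mem_map']

theorem card_relabel (σ : Equiv.Perm V) (E : Finset (Sym2 V)) : #(relabel σ E) = #E :=
  card_map _

/-- The edge set `C` contains all edges of some copy of `T` on the vertex set of `T`. -/
def ContainsCopy (T : SimpleGraph V) (C : Finset (Sym2 V)) : Prop :=
  ∃ σ : Equiv.Perm V, ∀ x y, T.Adj x y → s(σ x, σ y) ∈ C

theorem ContainsCopy.of_relabel {T : SimpleGraph V} {σ : Equiv.Perm V} {C : Finset (Sym2 V)}
    (h : ContainsCopy T (relabel σ C)) : ContainsCopy T C := by
  obtain ⟨τ, hτ⟩ := h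
  exact ⟨τ.trans σ.symm, fun x y hxy => mk_mem_relabel.1 (hτ x y hxy)⟩

theorem ContainsCopy.exists_mem_copiesFamily {n : ℕ} {T : SimpleGraph (Fin n)}
    {C : Finset (Sym2 (Fin n))} (h : ContainsCopy T C) :
    ∃ A ∈ copiesFamily n T.edgeSet, A ⊆ C := by
  classical
  obtain ⟨σ, hσ⟩ := h
  refine ⟨relabel σ T.edgeFinset, ⟨σ, by simp [relabel]⟩, fun e => ?_⟩
  induction e with
  | h x y =>
    intro he
    rw [mk_mem_relabel, SimpleGraph.mem_edgeFinset, SimpleGraph.mem_edgeSet] at he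
    simpa using hσ _ _ he

variable [Fintype V] [DecidableEq V]

/-- From the position in which Client and Waiter own `C` and `W`, Waiter can force a copy of `T`
in Client's graph within the next `t` rounds of the unbiased game on the complete graph. -/
def BuildsWithin (T : SimpleGraph V) (t : ℕ) (C W : Finset (Sym2 V)) : Prop :=
  WaiterWins (univ.filter fun e : Sym2 V => ¬ e.IsDiag) 1 (fun C _ => ContainsCopy T C) t C W

variable {T : SimpleGraph V} {t : ℕ} {C W : Finset (Sym2 V)}

theorem BuildsWithin.of_relabel (σ : Equiv.Perm V)
    (h : BuildsWithin T t (relabel σ C) (relabel σ W)) : BuildsWithin T t C W := by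
  have hboard : (univ.filter fun e : Sym2 V => ¬ e.IsDiag).map σ.toEmbedding.sym2Map =
      univ.filter fun e : Sym2 V => ¬ e.IsDiag := by
    ext e
    induction e with
    | h x y => exact mk_mem_relabel.trans (by simp)
  unfold BuildsWithin at h
  rw [← hboard] at h
  exact (WaiterWins.of_map _ h).mono fun _ _ => ContainsCopy.of_relabel

theorem BuildsWithin.offer_pair {a b c d : V} (hab : a ≠ b) (hcd : c ≠ d)
    (hne : s(a, b) ≠ s(c, d)) (habC : s(a, b) ∉ C) (habW : s(a, b) ∉ W) (hcdC : s(c, d) ∉ C)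
    (hcdW : s(c, d) ∉ W) (win_ab : BuildsWithin T t (insert s(a, b) C) (insert s(c, d) W))
    (win_cd : BuildsWithin T t (insert s(c, d) C) (insert s(a, b) W)) :
    BuildsWithin T (t + 1) C W :=
  WaiterWins.offer_pair hne (by simp [hab, habC, habW]) (by simp [hcd, hcdC, hcdW]) win_ab win_cd

end Relabel

/-! ### Partial copies -/

section PartialCopy

variable {V : Type*} [Fintype V] [DecidableEq V] {T : SimpleGraph V} [DecidableRel T.Adj]
  {ρ t : ℕ} {D : Finset V} {C W : Finset (Sym2 V)}

/-- Client's graph `C` is a subforest of `T` spanning the vertex set `D`, with `ρ` components,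
and Waiter has touched the vertices outside `D` only through edges to `D`, at most as many at each
vertex as it has neighbours in `T[D]`. Vertices are relabelled after every round, so that
the copy of `T` under construction is always embedded by the identity. -/
structure IsPartialCopy (T : SimpleGraph V) [DecidableRel T.Adj] (ρ : ℕ) (D : Finset V)
    (C W : Finset (Sym2 V)) : Prop where
  subforest : ∀ x y, s(x, y) ∈ C → T.Adj x y ∧ x ∈ D
  card : #C + ρ = #D
  touches : ∀ x y, s(x, y) ∈ W → x ∈ D ∨ y ∈ D
  degree_le : ∀ x ∈ D, #{u | u ∉ D ∧ s(x, u) ∈ W} ≤ #{z ∈ D | T.Adj x z}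

theorem isPartialCopy_singleton (v : V) : IsPartialCopy T 1 {v} ∅ ∅ where
  subforest := by simp
  card := by simp
  touches := by simp
  degree_le := by simp

/-- Waiter's edges after the round in which he offers the edges from `x` to the free vertices `u`
and `u'`, Client takes `s(x, u)`, and `u` is relabelled as `y`. -/
def nextWaiter (W : Finset (Sym2 V)) (x y u u' : V) : Finset (Sym2 V) :=
  relabel (Equiv.swap y u) (insert s(x, u') W)

omit [Fintype V] in
theorem mk_mem_nextWaiter {x y u u' a b : V} : s(a, b) ∈ nextWaiter W x y u u' ↔
    s(Equiv.swap y u a, Equiv.swap y u b) = s(x, u') ∨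
      s(Equiv.swap y u a, Equiv.swap y u b) ∈ W := by
  rw [nextWaiter, mk_mem_relabel, Equiv.symm_swap, mem_insert]

omit [Fintype V] in
theorem mk_mem_nextWaiter_of_ne {x y u u' z : V} (hz : z ∈ D) (hzx : z ≠ x) (hy : y ∉ D)
    (hu : u ∉ D) (hu' : u' ∉ D) (a : V) :
    s(z, a) ∈ nextWaiter W x y u u' ↔ s(z, Equiv.swap y u a) ∈ W := by
  have hfix : Equiv.swap y u z = z := by grind
  rw [mk_mem_nextWaiter, hfix]
  grind

namespace IsPartialCopy

theorem mem_right (h : IsPartialCopy T ρ D C W) {x y : V} (hxy : s(x, y) ∈ C) : y ∈ D :=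
  (h.subforest y x (by rwa [Sym2.eq_swap])).2

theorem relabel_insert_eq (h : IsPartialCopy T ρ D C W) {x y u : V} (hx : x ∈ D) (hy : y ∉ D)
    (hu : u ∉ D) : relabel (Equiv.swap y u) (insert s(x, u) C) = insert s(x, y) C := by
  have hfix : ∀ {z}, z ∈ D → Equiv.swap y u z = z := fun hz =>
    Equiv.swap_apply_of_ne_of_ne (by grind) (by grind)
  have hC : relabel (Equiv.swap y u) C = C := by
    refine eq_of_subset_of_card_le (fun e he => ?_) (card_relabel _ _).ge
    rw [relabel, mem_map] at he
    obtain ⟨e, he, rfl⟩ := he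
    induction e with
    | h a b => simpa [hfix (h.subforest a b he).2, hfix (h.mem_right he)] using he
  rw [relabel, map_insert, ← relabel, hC]
  simp [hfix hx]

theorem card_touched_nextWaiter_self (h : IsPartialCopy T ρ D C W) {x y u u' : V} (hx : x ∈ D)
    (hy : y ∉ D) (hu : u ∉ D) : #{v | v ∉ insert y D ∧ s(y, v) ∈ nextWaiter W x y u u'} = 0 := by
  refine card_eq_zero.2 (filter_eq_empty_iff.2 fun v _ hv => ?_)
  have hv' : Equiv.swap y u v ∉ D := by grind
  rcases mk_mem_nextWaiter.1 hv.2 with hvW | hvW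
  · grind
  · exact (h.touches _ _ hvW).elim (by grind) hv'

theorem card_touched_next_le (h : IsPartialCopy T ρ D C W) {x y u u' : V} (hx : x ∈ D)
    (hy : y ∉ D) (hxy : T.Adj x y) (hu : u ∉ D) {z : V} (hz : z ∈ insert y D) :
    #{v | v ∉ insert y D ∧ s(z, v) ∈ nextWaiter W x y u u'} ≤ #{w ∈ insert y D | T.Adj z w} := by
  have hfree {v} (hv : v ∉ insert y D) : Equiv.swap y u v ∉ D := by grind
  rcases mem_insert.1 hz with rfl | hz
  · exact (h.card_touched_nextWaiter_self hx hy hu).trans_le (Nat.zero_le _)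
  have hold : #{v | v ∉ insert y D ∧ s(z, v) ∈ nextWaiter W x y u u'} ≤
      #{v | v ∉ D ∧ (z = x ∧ v = u' ∨ s(z, v) ∈ W)} := by
    refine card_le_card_of_injOn (Equiv.swap y u) (fun v hv => ?_) (Equiv.injective _).injOn
    have hzfix : Equiv.swap y u z = z := by grind
    simp only [coe_filter, mem_univ, true_and, Set.mem_ofPred_eq, mk_mem_nextWaiter, hzfix] at hv ⊢
    have hv' := hfree hv.1
    grind
  refine hold.trans ?_
  obtain rfl | hzx := eq_or_ne z x
  · have hsub : ({v | v ∉ D ∧ (z = z ∧ v = u' ∨ s(z, v) ∈ W)} : Finset V) ⊆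
        insert u' (univ.filter fun v => v ∉ D ∧ s(z, v) ∈ W) := fun v => by
      simp only [mem_filter_univ, mem_insert]
      tauto
    rw [filter_insert, if_pos hxy, card_insert_of_notMem (by simp [hy])]
    exact (card_le_card hsub).trans ((card_insert_le _ _).trans
      (Nat.succ_le_succ (h.degree_le z hz)))
  · simp only [hzx, false_and, false_or]
    exact (h.degree_le z hz).trans (card_le_card (filter_subset_filter _ (subset_insert _ _)))

theorem next (h : IsPartialCopy T ρ D C W) {x y u u' : V} (hx : x ∈ D) (hy : y ∉ D)
    (hxy : T.Adj x y) (hu : u ∉ D) :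
    IsPartialCopy T ρ (insert y D) (insert s(x, y) C) (nextWaiter W x y u u') where
  subforest a b hab := by
    rcases mem_insert.1 hab with hab | hab
    · rcases Sym2.eq_iff.1 hab with ⟨rfl, rfl⟩ | ⟨rfl, rfl⟩
      · exact ⟨hxy, mem_insert_of_mem hx⟩
      · exact ⟨hxy.symm, mem_insert_self _ _⟩
    · exact (h.subforest a b hab).imp_right mem_insert_of_mem
  card := by
    rw [card_insert_of_notMem hy, card_insert_of_notMem fun hC => hy (h.mem_right hC), ← h.card]
    omega
  touches a b hab := by
    by_contra! hfree
    have ha : Equiv.swap y u a ∉ D := by grind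
    have hb : Equiv.swap y u b ∉ D := by grind
    rcases mk_mem_nextWaiter.1 hab with hab | hab
    · grind
    · exact (h.touches _ _ hab).elim ha hb
  degree_le _ hz := h.card_touched_next_le hx hy hxy hu hz

theorem insert_free (h : IsPartialCopy T ρ D C W) {c : V} (hc : c ∉ D) :
    IsPartialCopy T (ρ + 1) (insert c D) C W where
  subforest x y hxy := (h.subforest x y hxy).imp_right mem_insert_of_mem
  card := by rw [card_insert_of_notMem hc, ← h.card, add_assoc]
  touches x y hxy := (h.touches x y hxy).imp mem_insert_of_mem mem_insert_of_mem
  degree_le x hx := by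
    rcases mem_insert.1 hx with rfl | hx
    · refine (card_eq_zero.2 (filter_eq_empty_iff.2 fun u _ hu => ?_)).trans_le (Nat.zero_le _)
      exact (h.touches _ _ hu.2).elim hc fun huD => hu.1 (mem_insert_of_mem huD)
    · have hsub : ({u | u ∉ insert c D ∧ s(x, u) ∈ W} : Finset V) ⊆
          univ.filter fun u => u ∉ D ∧ s(x, u) ∈ W :=
        monotone_filter_right _ fun u _ hu => ⟨fun huD => hu.1 (mem_insert_of_mem huD), hu.2⟩
      exact (card_le_card hsub).trans ((h.degree_le x hx).trans
        (card_le_card (filter_subset_filter _ (subset_insert _ _))))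

theorem mem_of_adj_of_ne {v : V} (h : IsPartialCopy T ρ (univ.erase v) C W) (hT : T.IsTree)
    (hρ : ρ ≤ T.degree v) {x y : V} (hxy : T.Adj x y) (hx : x ≠ v) (hy : y ≠ v) :
    s(x, y) ∈ C := by
  have hsub : C ⊆ T.edgeFinset \ T.incidenceFinset v := fun e he => by
    induction e with
    | h a b =>
      have ha := h.subforest a b he
      have hb := h.mem_right he
      grind [SimpleGraph.mem_edgeFinset, SimpleGraph.mem_edgeSet,
        SimpleGraph.mem_incidenceFinset, SimpleGraph.mk'_mem_incidenceSet_iff]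
  have hcard : #(T.edgeFinset \ T.incidenceFinset v) ≤ #C := by
    have hinc := card_sdiff_add_card_eq_card (T.incidenceFinset_subset v)
    have hD := h.card
    have hedges := hT.card_edgeFinset
    rw [T.card_incidenceFinset_eq_degree] at hinc
    rw [card_erase_of_mem (mem_univ v), card_univ] at hD
    omega
  rw [eq_of_subset_of_card_le hsub hcard]
  simp [hxy, SimpleGraph.mk'_mem_incidenceSet_iff, hx.symm, hy.symm]

end IsPartialCopy

omit [DecidableEq V] in
theorem exists_pair_notMem {B : Finset V} (hB : #B + 2 ≤ Fintype.card V) :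
    ∃ u ∉ B, ∃ u' ∉ B, u ≠ u' := by
  classical
  obtain ⟨u, hu, u', hu', hne⟩ := one_lt_card.1 (show 1 < #Bᶜ by rw [card_compl]; omega)
  exact ⟨u, mem_compl.1 hu, u', mem_compl.1 hu', hne⟩

theorem IsPartialCopy.card_touched_le (h : IsPartialCopy T ρ D C W) {x : V} (hx : x ∈ D) :
    #{u | u ∉ D ∧ s(x, u) ∈ W} ≤ T.degree x := by
  refine (h.degree_le x hx).trans ?_
  rw [← T.card_neighborFinset_eq_degree]
  exact card_le_card fun z => by simp

theorem exists_free_pair {x : V} (hcard : #D + #{u | u ∉ D ∧ s(x, u) ∈ W} + 2 ≤ Fintype.card V) :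
    ∃ u ∉ D, ∃ u' ∉ D, u ≠ u' ∧ s(x, u) ∉ W ∧ s(x, u') ∉ W := by
  obtain ⟨u, hu, u', hu', hne⟩ :=
    exists_pair_notMem ((Nat.add_le_add_right (card_union_le _ _) 2).trans hcard)
  simp only [mem_union, mem_filter_univ] at hu hu'
  exact ⟨u, by tauto, u', by tauto, hne, by tauto, by tauto⟩

theorem buildsWithin_of_invariant (I : ℕ → Finset V → Finset (Sym2 V) → Prop)
    (step : ∀ j D C W, IsPartialCopy T ρ D C W → I (j + 1) D W →
      ∃ x ∈ D, ∃ y ∉ D, T.Adj x y ∧ ∃ u ∉ D, ∃ u' ∉ D, u ≠ u' ∧ s(x, u) ∉ W ∧ s(x, u') ∉ W ∧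
        I j (insert y D) (nextWaiter W x y u u') ∧ I j (insert y D) (nextWaiter W x y u' u))
    (final : ∀ D C W, IsPartialCopy T ρ D C W → I 0 D W → BuildsWithin T t C W) (j : ℕ)
    (h : IsPartialCopy T ρ D C W) (hI : I j D W) : BuildsWithin T (t + j) C W := by
  induction j generalizing D C W with
  | zero => exact final D C W h hI
  | succ j ih =>
    obtain ⟨x, hx, y, hy, hxy, u, hu, u', hu', hne, hxu, hxu', hI₁, hI₂⟩ := step j D C W h hI
    refine BuildsWithin.offer_pair (a := x) (b := u) (c := x) (d := u') (by grind) (by grind)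
      (by grind) (fun hC => hu (h.mem_right hC)) hxu
      (fun hC => hu' (h.mem_right hC)) hxu' ?_ ?_
    · apply BuildsWithin.of_relabel (Equiv.swap y u)
      rw [h.relabel_insert_eq hx hy hu]
      exact ih (h.next hx hy hxy hu) hI₁
    · apply BuildsWithin.of_relabel (Equiv.swap y u')
      rw [h.relabel_insert_eq hx hy hu']
      exact ih (h.next hx hy hxy hu') hI₂

end PartialCopy

/-! ### Growing a partial copy -/

section Growth

variable {V : Type*}

/-- Every vertex set between `D₀` and `X`, except `X` itself, can be enlarged within `X` along an
edge of `T`. -/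
def GrowsTo (T : SimpleGraph V) (D₀ X : Finset V) : Prop :=
  ∀ D, D₀ ⊆ D → D ⊂ X → ∃ x ∈ D, ∃ y ∈ X, y ∉ D ∧ T.Adj x y

theorem growsTo_of_connected {T : SimpleGraph V} (hT : T.Connected) {D₀ X : Finset V}
    (hne : D₀.Nonempty)
    (hX : ∀ x ∉ X, ∀ y ∈ X, T.Adj x y → y ∈ D₀ ∨ ∀ z, T.Adj x z → z = y) : GrowsTo T D₀ X := by
  intro D hD hDX
  obtain ⟨y, hyX, hyD⟩ := exists_of_ssubset hDX
  obtain ⟨x, hx⟩ := hne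
  let B : Set V := {z | z ∈ D ∨ z ∉ X ∧ ∀ w ∈ X, T.Adj z w → w ∈ D}
  obtain ⟨p⟩ := hT.preconnected x y
  obtain ⟨⟨⟨a, b⟩, hab⟩, -, haB, hbB⟩ := p.exists_boundary_dart B (Or.inl (hD hx)) (by simp [B, *])
  simp only [B, Set.mem_ofPred_eq, not_or, not_and] at haB hbB hab
  have hbX : b ∈ X := by
    by_contra hbX
    obtain ⟨w, hwX, hbw, hwD⟩ : ∃ w ∈ X, T.Adj b w ∧ w ∉ D := by simpa using hbB.2 hbX
    obtain hw | hw := hX b hbX w hwX hbw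
    · exact hwD (hD hw)
    · obtain rfl := hw a hab.symm
      exact haB.elim hwD fun ha => ha.1 hwX
  exact haB.elim (fun ha => ⟨a, ha, b, hbX, hbB.1, hab⟩) fun ha => (hbB.1 (ha.2 b hbX hab)).elim

variable [Fintype V] [DecidableEq V] {T : SimpleGraph V} [DecidableRel T.Adj] {ρ t : ℕ}
  {D D₀ S X : Finset V} {C W W₀ : Finset (Sym2 V)} {x y u u' : V}

/-- No edge of Waiter lies inside `D`, and no vertex outside `D` meets two of them. -/
structure Fresh (D : Finset V) (W : Finset (Sym2 V)) : Prop where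
  card_le : #W ≤ #D
  clean : ∀ a ∈ D, ∀ b ∈ D, s(a, b) ∉ W
  unique : ∀ u ∉ D, ∀ a b, s(a, u) ∈ W → s(b, u) ∈ W → a = b

omit [Fintype V] [DecidableEq V] in
theorem fresh_singleton (v : V) : Fresh {v} ∅ where
  card_le := by simp
  clean := by simp
  unique := by simp

omit [Fintype V] in
theorem Fresh.next (h : Fresh D W) (hx : x ∈ D) (hy : y ∉ D) (hu : u ∉ D) (hu' : u' ∉ D)
    (hne : u ≠ u') (huW : ∀ a, s(a, u) ∉ W) (hu'W : ∀ a, s(a, u') ∉ W) :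
    Fresh (insert y D) (nextWaiter W x y u u') where
  card_le := by
    rw [nextWaiter, card_relabel, card_insert_of_notMem hy]
    exact (card_insert_le _ _).trans (Nat.succ_le_succ h.card_le)
  clean a ha b hb hab := by
    have hswap {z} (hz : z ∈ insert y D) : Equiv.swap y u z ∈ D ∨ Equiv.swap y u z = u := by grind
    rw [mk_mem_nextWaiter] at hab
    rcases hswap ha with ha | ha <;> rcases hswap hb with hb | hb
    · grind [h.clean _ ha _ hb]
    · grind
    · grind
    · grind
  unique v hv a b ha hb := by
    have hv' : Equiv.swap y u v ∉ D := by grind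
    apply (Equiv.swap y u).injective
    rw [mk_mem_nextWaiter] at ha hb
    obtain hvu | hvu := eq_or_ne (Equiv.swap y u v) u'
    · grind
    · exact h.unique _ hv' _ _ (by grind) (by grind)

theorem IsPartialCopy.exists_untouched_pair (h : IsPartialCopy T ρ D C W) (hW : #W ≤ #D)
    (hcard : 2 * #D + 2 ≤ Fintype.card V) :
    ∃ u ∉ D, ∃ u' ∉ D, u ≠ u' ∧ (∀ a, s(a, u) ∉ W) ∧ ∀ a, s(a, u') ∉ W := by
  set B := univ.filter fun v => v ∉ D ∧ ∃ a, s(a, v) ∈ W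
  have hBW : #B ≤ #W := by
    refine card_le_card_of_forall_subsingleton (fun v e => v ∈ e) (fun v hv => ?_) ?_
    · obtain ⟨-, -, a, ha⟩ := mem_filter.1 hv
      exact ⟨_, ha, Sym2.mem_mk_right _ _⟩
    · rintro e he v ⟨hvB, hve⟩ w ⟨hwB, hwe⟩
      by_contra hne
      obtain rfl := (Sym2.mem_and_mem_iff hne).1 ⟨hve, hwe⟩
      have := h.touches v w he
      grind
  have hDB := card_union_le D B
  obtain ⟨u, hu, u', hu', hne⟩ := exists_pair_notMem (B := D ∪ B) (by omega)
  simp only [mem_union, B, mem_filter_univ, not_or, not_and, not_exists] at hu hu'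
  exact ⟨u, hu.1, u', hu'.1, hne, hu.2 hu.1, hu'.2 hu'.1⟩

theorem Fresh.buildsWithin (hW : Fresh D₀ W) (h : IsPartialCopy T ρ D₀ C W)
    (hgrow : GrowsTo T D₀ X) (hsub : D₀ ⊆ X) (hcard : 2 * #X ≤ Fintype.card V)
    (final : ∀ C W, IsPartialCopy T ρ X C W → Fresh X W → BuildsWithin T t C W) :
    BuildsWithin T (t + (#X - #D₀)) C W := by
  refine buildsWithin_of_invariant
    (fun j D W => D₀ ⊆ D ∧ D ⊆ X ∧ #D + j = #X ∧ Fresh D W) ?_ ?_ _ h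
    ⟨Subset.rfl, hsub, Nat.add_sub_of_le (card_le_card hsub), hW⟩
  · rintro j D C W h ⟨hD, hDX, hj, hW⟩
    obtain ⟨x, hx, y, hyX, hy, hxy⟩ := hgrow D hD (hDX.ssubset_of_ne (by rintro rfl; omega))
    obtain ⟨u, hu, u', hu', hne, huW, hu'W⟩ := h.exists_untouched_pair hW.card_le (by omega)
    have hj' : #(insert y D) + j = #X := by rw [card_insert_of_notMem hy]; omega
    have hD' := hD.trans (subset_insert y D)
    have hDX' := insert_subset hyX hDX
    exact ⟨x, hx, y, hy, hxy, u, hu, u', hu', hne, huW x, hu'W x,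
      ⟨hD', hDX', hj', hW.next hx hy hu hu' hne huW hu'W⟩,
      ⟨hD', hDX', hj', hW.next hx hy hu' hu hne.symm hu'W huW⟩⟩
  · rintro D C W h ⟨-, hDX, hj, hW⟩
    obtain rfl := eq_of_subset_of_card_le hDX (by omega)
    exact final C W h hW

/-- Up to a relabelling of the vertices outside `D₀`, Waiter's edges at `S` in `W` are the same as
in `W₀`. -/
def AgreesAt (S D₀ : Finset V) (W W₀ : Finset (Sym2 V)) : Prop :=
  ∃ τ : Equiv.Perm V, (∀ z ∈ D₀, τ z = z) ∧ ∀ s ∈ S, ∀ a, s(s, a) ∈ W ↔ s(s, τ a) ∈ W₀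

namespace AgreesAt

omit [Fintype V]

omit [DecidableEq V] in
theorem refl (S D₀ : Finset V) (W : Finset (Sym2 V)) : AgreesAt S D₀ W W :=
  ⟨Equiv.refl V, fun _ _ => rfl, fun _ _ _ => Iff.rfl⟩

omit [DecidableEq V] in
theorem mono {S' D' : Finset V} (h : AgreesAt S D₀ W W₀) (hS : S' ⊆ S) (hD : D' ⊆ D₀) :
    AgreesAt S' D' W W₀ :=
  h.imp fun _ hτ => ⟨fun z hz => hτ.1 z (hD hz), fun s hs => hτ.2 s (hS hs)⟩

theorem next (h : AgreesAt S D₀ W W₀) (hS : S ⊆ D) (hD : D₀ ⊆ D) (hxS : x ∉ S) (hy : y ∉ D)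
    (hu : u ∉ D) (hu' : u' ∉ D) : AgreesAt S D₀ (nextWaiter W x y u u') W₀ := by
  obtain ⟨τ, hfix, hτ⟩ := h
  refine ⟨(Equiv.swap y u).trans τ, fun z hz => ?_, fun s hs a => ?_⟩
  · rw [Equiv.trans_apply, Equiv.swap_apply_of_ne_of_ne (by grind) (by grind), hfix z hz]
  · rw [mk_mem_nextWaiter_of_ne (hS hs) (by grind) hy hu hu', hτ s hs, Equiv.trans_apply]

omit [DecidableEq V] in
theorem notMem (h : AgreesAt S D₀ W W₀) (hW₀ : Fresh D₀ W₀) {s z : V} (hs : s ∈ S) (hsD : s ∈ D₀)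
    (hz : z ∈ D₀) : s(s, z) ∉ W := by
  obtain ⟨τ, hfix, hτ⟩ := h
  rw [hτ s hs, hfix z hz]
  exact hW₀.clean s hsD z hz

omit [DecidableEq V] in
theorem eq_of_mem (h : AgreesAt S D₀ W W₀) (hW₀ : Fresh D₀ W₀) {a b : V} (hu : u ∉ D₀) (ha : a ∈ S)
    (hb : b ∈ S) (hau : s(a, u) ∈ W) (hbu : s(b, u) ∈ W) : a = b := by
  obtain ⟨τ, hfix, hτ⟩ := h
  have hτu : τ u ∉ D₀ := fun hτu => hu (τ.injective (hfix _ hτu) ▸ hτu)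
  exact hW₀.unique _ hτu _ _ ((hτ a ha u).1 hau) ((hτ b hb u).1 hbu)

end AgreesAt

theorem IsPartialCopy.buildsWithin_of_growsTo (h : IsPartialCopy T ρ D₀ C W)
    (hgrow : GrowsTo T D₀ X) (hsub : D₀ ⊆ X) (hS : S ⊆ D₀)
    (hSX : ∀ s ∈ S, ∀ y ∈ X, T.Adj s y → y ∈ D₀) (hcard : ∀ x, #X + T.degree x + 1 ≤ Fintype.card V)
    (final : ∀ C W', IsPartialCopy T ρ X C W' → AgreesAt S D₀ W' W → BuildsWithin T t C W') :
    BuildsWithin T (t + (#X - #D₀)) C W := by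
  refine buildsWithin_of_invariant
    (fun j D W' => D₀ ⊆ D ∧ D ⊆ X ∧ #D + j = #X ∧ AgreesAt S D₀ W' W) ?_ ?_ _ h
    ⟨Subset.rfl, hsub, Nat.add_sub_of_le (card_le_card hsub), .refl _ _ _⟩
  · rintro j D C W' h ⟨hD, hDX, hj, hW⟩
    obtain ⟨x, hx, y, hyX, hy, hxy⟩ := hgrow D hD (hDX.ssubset_of_ne (by rintro rfl; omega))
    have hxS : x ∉ S := fun hxS => hy (hD (hSX x hxS y hyX hxy))
    obtain ⟨u, hu, u', hu', hne, hxu, hxu'⟩ := exists_free_pair (D := D) (W := W') (x := x)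
      (by have := hcard x; have := h.card_touched_le hx; omega)
    have hj' : #(insert y D) + j = #X := by rw [card_insert_of_notMem hy]; omega
    have hD' := hD.trans (subset_insert y D)
    have hDX' := insert_subset hyX hDX
    exact ⟨x, hx, y, hy, hxy, u, hu, u', hu', hne, hxu, hxu',
      ⟨hD', hDX', hj', hW.next (hS.trans hD) hD hxS hy hu hu'⟩,
      ⟨hD', hDX', hj', hW.next (hS.trans hD) hD hxS hy hu' hu⟩⟩
  · rintro D C W' h ⟨-, hDX, hj, hW⟩
    obtain rfl := eq_of_subset_of_card_le hDX (by omega)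
    exact final C W' h hW

end Growth

/-! ### Branches with many leaves -/

section Leaves

variable {V : Type*} {T : SimpleGraph V}

/-- `l` attaches to every vertex of `A` a leaf of `T` outside `A`. -/
structure IsLeafMap (T : SimpleGraph V) (A : Finset V) (l : V → V) : Prop where
  adj : ∀ a ∈ A, T.Adj a (l a)
  eq_of_adj : ∀ a ∈ A, ∀ z, T.Adj (l a) z → z = a
  notMem : ∀ a ∈ A, l a ∉ A

theorem IsLeafMap.injOn {A : Finset V} {l : V → V} (hl : IsLeafMap T A l) : Set.InjOn l A :=
  fun a ha b hb hab => hl.eq_of_adj b hb a (hab ▸ (hl.adj a ha).symm)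

theorem IsLeafMap.mono {A B : Finset V} {l : V → V} (hl : IsLeafMap T A l) (hB : B ⊆ A) :
    IsLeafMap T B l where
  adj a ha := hl.adj a (hB ha)
  eq_of_adj a ha := hl.eq_of_adj a (hB ha)
  notMem a ha hla := hl.notMem a (hB ha) (hB hla)

variable [DecidableEq V] {Δ : ℕ} {A S F : Finset V} {W : Finset (Sym2 V)}

theorem IsLeafMap.image_erase {l : V → V} {v : V} (hl : IsLeafMap T S l) (hv : v ∈ S) :
    (S.erase v).image l = (S.image l).erase (l v) := by
  rw [erase_eq, erase_eq, image_sdiff_of_injOn hl.injOn (by simpa using hv), image_singleton]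

theorem IsLeafMap.disjoint_image {l : V → V} (hl : IsLeafMap T A l) (hS : S ⊆ A) :
    Disjoint A (S.image l) :=
  disjoint_right.2 <| forall_mem_image.2 fun s hs => hl.notMem s (hS hs)

theorem IsLeafMap.apply_notMem_image {l : V → V} {q : V} (hl : IsLeafMap T A l) (hS : S ⊆ A)
    (hq : q ∈ A) (hqS : q ∉ S) : l q ∉ S.image l := fun hql => by
  obtain ⟨s, hs, hsq⟩ := mem_image.1 hql
  exact hqS (hl.injOn (hS hs) hq hsq ▸ hs)

theorem IsLeafMap.eq_of_adj_of_adj {l : V → V} {x y z : V} (hl : IsLeafMap T S l)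
    (hx : x ∈ S.image l) (hxy : T.Adj x y) (hxz : T.Adj x z) : z = y := by
  obtain ⟨s, hs, rfl⟩ := mem_image.1 hx
  exact (hl.eq_of_adj s hs z hxz).trans (hl.eq_of_adj s hs y hxy).symm

/-- The vertices of `F` that Waiter has joined to `S`. -/
def blocked (W : Finset (Sym2 V)) (F S : Finset V) : Finset V :=
  {u ∈ F | ∃ s ∈ S, s(s, u) ∈ W}

theorem exists_leaf_offer (hS : 2 ≤ #S) (hFS : #F = #S)
    (hunique : ∀ u ∈ F, ∀ a ∈ S, ∀ b ∈ S, s(a, u) ∈ W → s(b, u) ∈ W → a = b)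
    (hdeg : ∀ s ∈ S, #{u ∈ F | s(s, u) ∈ W} ≤ Δ)
    (hb : blocked W F S = ∅ ∨ #(blocked W F S) + 2 * Δ + 3 ≤ 2 * #S) :
    ∃ v ∈ S, ∃ u ∈ F, ∃ u' ∈ F, u ≠ u' ∧ s(v, u) ∉ W ∧ s(v, u') ∉ W ∧ ∀ c, c = u ∨ c = u' →
      blocked W (F.erase c) (S.erase v) = ∅ ∨
        #(blocked W (F.erase c) (S.erase v)) + 2 * Δ + 3 ≤ 2 * #(S.erase v) := by
  rcases (blocked W F S).eq_empty_or_nonempty with hB | ⟨u₀, hu₀⟩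
  · obtain ⟨v, hv⟩ := card_pos.1 (by omega : 0 < #S)
    obtain ⟨u, hu, u', hu', hne⟩ := one_lt_card.1 (by omega : 1 < #F)
    simp only [blocked, filter_eq_empty_iff, not_exists, not_and] at hB ⊢
    exact ⟨v, hv, u, hu, u', hu', hne, hB hu v hv, hB hu' v hv, fun c _ => Or.inl
      fun w hw s hs => hB (mem_of_mem_erase hw) s (mem_of_mem_erase hs)⟩
  obtain ⟨hu₀F, v, hv, hvu₀⟩ := mem_filter.1 hu₀
  have hb' := hb.resolve_left (ne_empty_of_mem hu₀)
  set N := F.filter fun u => s(v, u) ∈ W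
  set B := blocked W F (S.erase v)
  have herase (c : V) : blocked W (F.erase c) (S.erase v) = B.erase c := filter_erase _ _ _
  have hSv : #(S.erase v) + 1 = #S := card_erase_add_one hv
  have hN : #N ≤ Δ := hdeg v hv
  have hB : #B + 1 ≤ #(blocked W F S) := by
    refine card_lt_card ⟨fun u => by simp only [B, blocked, mem_filter]; grind, fun hsub => ?_⟩
    obtain ⟨-, s, hs, hsu⟩ := mem_filter.1 (hsub hu₀)
    exact ne_of_mem_erase hs (hunique u₀ hu₀F s (mem_of_mem_erase hs) v hv hsu hvu₀)
  have hBN {u : V} (hu : u ∈ B) : s(v, u) ∉ W := fun hvu => by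
    obtain ⟨huF, s, hs, hsu⟩ := mem_filter.1 hu
    exact ne_of_mem_erase hs (hunique u huF s (mem_of_mem_erase hs) v hv hsu hvu)
  obtain hB1 | hB1 := Nat.lt_or_ge 1 #B
  · obtain ⟨u, hu, u', hu', hne⟩ := one_lt_card.1 hB1
    refine ⟨v, hv, u, (mem_filter.1 hu).1, u', (mem_filter.1 hu').1, hne, hBN hu, hBN hu',
      fun c hc => Or.inr ?_⟩
    rw [herase, card_erase_of_mem (by grind)]
    omega
  · obtain ⟨u, hu, u', hu', hne⟩ := one_lt_card.1 (show 1 < #(F \ N) by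
      have := le_card_sdiff N F
      omega)
    simp only [N, mem_sdiff, mem_filter, not_and] at hu hu'
    refine ⟨v, hv, u, hu.1, u', hu'.1, hne, hu.2 hu.1, hu'.2 hu'.1, fun c _ => ?_⟩
    rw [herase, ← card_eq_zero]
    have := card_erase_le (s := B) (a := c)
    omega

theorem card_blocked_nextWaiter_le {D : Finset V} {x y u u' : V} (hS : S ⊆ D) (hx : x ∉ S)
    (hF : Disjoint F D) (hy : y ∈ F) (hu : u ∈ F) (hu' : u' ∈ F) :
    #(blocked (nextWaiter W x y u u') (F.erase y) S) ≤ #(blocked W (F.erase u) S) := by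
  have hFD {z} (hz : z ∈ F) : z ∉ D := disjoint_left.1 hF hz
  refine card_le_card_of_injOn (Equiv.swap y u) (fun w hw => ?_) (Equiv.injective _).injOn
  simp only [blocked, coe_filter, Set.mem_ofPred_eq, mem_erase] at hw ⊢
  obtain ⟨⟨hwy, hwF⟩, s, hs, hsw⟩ := hw
  exact ⟨by grind, s, hs, (mk_mem_nextWaiter_of_ne (hS hs) (ne_of_mem_of_not_mem hs hx) (hFD hy)
    (hFD hu) (hFD hu') w).1 hsw⟩

/-- Exchanging the leaves `a` of `p` and `b` of `q` turns `C + pb + qa` into a copy of `T`. -/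
theorem containsCopy_of_swap_leaves {C : Finset (Sym2 V)} {a b p q : V}
    (hC : ∀ x y, T.Adj x y → s(x, y) ∈ C ∨ s(x, y) = s(p, a)) (ha : ∀ x y, s(x, y) ∈ C → x ≠ a)
    (hb : ∀ z, T.Adj b z → z = q) (hpa : p ≠ a) (hpb : p ≠ b) (hqa : q ≠ a) (hqb : q ≠ b) :
    ContainsCopy T (insert s(p, b) (insert s(q, a) C)) := by
  refine ⟨Equiv.swap a b, fun x y hxy => ?_⟩
  have hswap {z} (hza : z ≠ a) (hzb : z ≠ b) : Equiv.swap a b z = z :=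
    Equiv.swap_apply_of_ne_of_ne hza hzb
  change Sym2.map (Equiv.swap a b) s(x, y) ∈ _
  rcases hC x y hxy with hxyC | hxy
  · obtain rfl | hxb := eq_or_ne x b
    · obtain rfl := hb y hxy
      simp [hswap hqa hqb, Sym2.eq_swap]
    obtain rfl | hyb := eq_or_ne y b
    · obtain rfl := hb x hxy.symm
      simp [hswap hqa hqb]
    rw [Sym2.map_mk, hswap (ha x y hxyC) hxb, hswap (ha y x (by rwa [Sym2.eq_swap])) hyb]
    exact mem_insert_of_mem (mem_insert_of_mem hxyC)
  · rw [hxy, Sym2.map_mk, Equiv.swap_apply_left, hswap hpa hpb]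
    exact mem_insert_self _ _

variable [Fintype V] [DecidableRel T.Adj] {ρ t : ℕ} {D D₀ Q : Finset V}
  {C W₀ : Finset (Sym2 V)} {l : V → V} {p q q' : V}

theorem IsPartialCopy.buildsWithin_one_of_leaf (hT : T.IsTree)
    (h : IsPartialCopy T 1 (univ.erase (l p)) C W) (hl : IsLeafMap T {p, q} l) (hpq : p ≠ q)
    (hpq' : p ≠ q') (hp : s(p, l p) ∉ W) (hq : s(p, l q) ∉ W) :
    BuildsWithin T 1 (insert s(q, l p) C) (insert s(q', l p) W) := by
  have hTp := hl.adj p (by simp)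
  have hTq := hl.adj q (by simp)
  have hleafp := hl.eq_of_adj p (by simp)
  have hleafq := hl.eq_of_adj q (by simp)
  have hne : ∀ a ∈ ({p, q} : Finset V), ∀ b ∈ ({p, q} : Finset V), a ≠ l b :=
    fun a ha b hb hab => hl.notMem b hb (hab ▸ ha)
  have hlpq : l p ≠ l q := fun hlpq => hpq (hl.injOn (by simp) (by simp) hlpq)
  have hpC : s(p, l p) ∉ C := fun hC => by simpa using h.mem_right hC
  have hqC : s(p, l q) ∉ C := fun hC => hpq (hleafq p (h.subforest _ _ hC).1.symm)
  have hC : ∀ x y, T.Adj x y → s(x, y) ∈ C ∨ s(x, y) = s(p, l p) := fun x y hxy => by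
    obtain rfl | hx := eq_or_ne x (l p)
    · exact Or.inr (by rw [hleafp y hxy, Sym2.eq_swap])
    obtain rfl | hy := eq_or_ne y (l p)
    · exact Or.inr (by rw [hleafp x hxy.symm])
    have hdeg : 1 ≤ T.degree (l p) := (T.degree_pos_iff_exists_adj _).2 ⟨p, hTp.symm⟩
    exact Or.inl (h.mem_of_adj_of_ne hT hdeg hxy hx hy)
  refine BuildsWithin.offer_pair (a := p) (b := l p) (c := p) (d := l q) hTp.ne (by grind)
    (by grind) (by grind) (by grind) (by grind) (by grind) ?_ ?_
  · exact WaiterWins.of_win ⟨Equiv.refl V, fun x y hxy =>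
      (hC x y hxy).elim (by simp +contextual) (by simp +contextual)⟩
  · exact WaiterWins.of_win (containsCopy_of_swap_leaves hC
      (fun x y hxy => ne_of_mem_erase (h.subforest x y hxy).2) hleafq (by grind) (by grind)
      (by grind) hTq.ne)

theorem IsPartialCopy.buildsWithin_two_of_leaf (hT : T.IsTree)
    (h : IsPartialCopy T 1 (univ.erase (l p)) C W) (hl : IsLeafMap T (insert p Q) l) (hpQ : p ∉ Q)
    (hQ : 3 ≤ #Q) (hunique : ∀ a ∈ Q, ∀ b ∈ Q, s(a, l p) ∈ W → s(b, l p) ∈ W → a = b)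
    (hp : s(p, l p) ∉ W) (hclean : ∀ q ∈ Q, s(p, l q) ∉ W) : BuildsWithin T 2 C W := by
  obtain ⟨q, hq, q', hq', hqq'⟩ : ∃ q ∈ {q ∈ Q | s(q, l p) ∉ W}, ∃ q' ∈ {q ∈ Q | s(q, l p) ∉ W},
      q ≠ q' := by
    have hjoined : #{q ∈ Q | s(q, l p) ∈ W} ≤ 1 := card_le_one.2 (by grind)
    have := card_filter_add_card_filter_not (s := Q) fun q => s(q, l p) ∈ W
    exact one_lt_card.1 (by omega)
  rw [mem_filter] at hq hq'
  have hnotC (a : V) : s(a, l p) ∉ C := fun hC => by simpa using h.mem_right hC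
  have hne : ∀ a ∈ Q, a ≠ l p := fun a ha hab => hl.notMem p (by simp) (hab ▸ by simp [ha])
  have hl' {q} (hq : q ∈ Q) : IsLeafMap T {p, q} l :=
    hl.mono (insert_subset_insert p (singleton_subset_iff.2 hq))
  have hpne {q} (hq : q ∈ Q) : p ≠ q := fun hpq => hpQ (hpq ▸ hq)
  exact BuildsWithin.offer_pair (hne q hq.1) (hne q' hq'.1) (hqq' <| Sym2.congr_left.1 ·)
    (hnotC q) hq.2 (hnotC q') hq'.2
    (h.buildsWithin_one_of_leaf hT (hl' hq.1) (hpne hq.1) (hpne hq'.1) hp (hclean q hq.1))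
    (h.buildsWithin_one_of_leaf hT (hl' hq'.1) (hpne hq'.1) (hpne hq.1) hp (hclean q' hq'.1))

/-- The leaves at `S` can still be embedded: Waiter's edges at `S ∪ Q` agree with `W₀`, and he has
joined few of the leaves at `S` to `S`. -/
structure LeafReady (l : V → V) (Δ : ℕ) (Q D₀ : Finset V) (W₀ : Finset (Sym2 V)) (S : Finset V)
    (W : Finset (Sym2 V)) : Prop where
  agrees : AgreesAt (S ∪ Q) D₀ W W₀
  blocked_le : blocked W (S.image l) S = ∅ ∨ #(blocked W (S.image l) S) + 2 * Δ + 3 ≤ 2 * #S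

omit [Fintype V] [DecidableRel T.Adj] in
theorem LeafReady.next (h : LeafReady l Δ Q D₀ W₀ S W) (hl : IsLeafMap T (S ∪ Q) l) {v u u' : V}
    (hv : v ∈ S) (hvQ : v ∉ Q) (hD : S ∪ Q ⊆ D) (hD₀ : D₀ ⊆ D) (hlD : Disjoint (S.image l) D)
    (hu : u ∈ S.image l) (hu' : u' ∈ S.image l)
    (hb : blocked W ((S.image l).erase u) (S.erase v) = ∅ ∨
      #(blocked W ((S.image l).erase u) (S.erase v)) + 2 * Δ + 3 ≤ 2 * #(S.erase v)) :
    LeafReady l Δ Q D₀ W₀ (S.erase v) (nextWaiter W v (l v) u u') where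
  agrees := by
    have hmem {z} (hz : z ∈ S.image l) : z ∉ D := disjoint_left.1 hlD hz
    have hsub : S.erase v ∪ Q ⊆ S ∪ Q := union_subset_union_left (erase_subset v S)
    exact (h.agrees.mono hsub Subset.rfl).next (hsub.trans hD) hD₀ (by simp [hvQ])
      (hmem (mem_image_of_mem l hv)) (hmem hu) (hmem hu')
  blocked_le := by
    have hle := card_blocked_nextWaiter_le (W := W) (x := v)
      ((erase_subset v S).trans (subset_union_left.trans hD)) (notMem_erase v S) hlD
      (mem_image_of_mem l hv) hu hu'
    rw [(hl.mono subset_union_left).image_erase hv, ← card_eq_zero]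
    rw [← card_eq_zero] at hb
    omega

theorem LeafReady.exists_offer (hW : LeafReady l Δ Q D₀ W₀ S W)
    (h : IsPartialCopy T 1 (S.image l)ᶜ C W) (hl : IsLeafMap T (S ∪ Q) l) (hSQ : Disjoint S Q)
    (hdeg : ∀ v, T.degree v ≤ Δ) (hS : 2 ≤ #S) (hW₀ : Fresh D₀ W₀) (hD₀ : S ∪ Q ⊆ D₀)
    (hlS : ∀ s ∈ S, l s ∉ D₀) : ∃ v ∈ S, ∃ u ∈ S.image l, ∃ u' ∈ S.image l, u ≠ u' ∧
      s(v, u) ∉ W ∧ s(v, u') ∉ W ∧ LeafReady l Δ Q D₀ W₀ (S.erase v) (nextWaiter W v (l v) u u') ∧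
      LeafReady l Δ Q D₀ W₀ (S.erase v) (nextWaiter W v (l v) u' u) := by
  have hlD₀ {u} (hu : u ∈ S.image l) : u ∉ D₀ := by
    obtain ⟨s, hs, rfl⟩ := mem_image.1 hu
    exact hlS s hs
  have hD₀' : D₀ ⊆ (S.image l)ᶜ := fun z hz => mem_compl.2 fun hzl => hlD₀ hzl hz
  have hD : S ∪ Q ⊆ (S.image l)ᶜ := hD₀.trans hD₀'
  have htouched {s} (hs : s ∈ S) : #{u ∈ S.image l | s(s, u) ∈ W} ≤ Δ := by
    refine (card_le_card fun u hu => ?_).trans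
      ((h.card_touched_le (hD (mem_union_left Q hs))).trans (hdeg s))
    simpa using hu
  obtain ⟨v, hv, u, hu, u', hu', hne, hvu, hvu', hnext⟩ := exists_leaf_offer hS
    (card_image_of_injOn (hl.injOn.mono (by simp))) (fun u hu a ha b hb =>
      hW.agrees.eq_of_mem hW₀ (hlD₀ hu) (mem_union_left _ ha) (mem_union_left _ hb))
    (fun s => htouched) hW.blocked_le
  have hI {c c'} (hc : c ∈ S.image l) (hc' : c' ∈ S.image l) (hcu : c = u ∨ c = u') :=
    hW.next hl hv (disjoint_left.1 hSQ hv) hD hD₀' disjoint_compl_right hc hc' (hnext c hcu)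
  exact ⟨v, hv, u, hu, u', hu', hne, hvu, hvu', hI hu hu' (Or.inl rfl), hI hu' hu (Or.inr rfl)⟩

theorem IsPartialCopy.buildsWithin_of_leafMap (hT : T.IsTree)
    (h : IsPartialCopy T 1 (S.image l)ᶜ C W) (hl : IsLeafMap T (S ∪ Q) l) (hSQ : Disjoint S Q)
    (hQ : 3 ≤ #Q) (hdeg : ∀ v, T.degree v ≤ Δ) (hS : 2 * Δ + 3 ≤ #S) {j : ℕ} (hj : #S = j + 1)
    (hW : AgreesAt (S ∪ Q) D₀ W W₀) (hW₀ : Fresh D₀ W₀) (hD₀ : S ∪ Q ⊆ D₀)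
    (hlS : ∀ s ∈ S, l s ∉ D₀) (hlQ : ∀ q ∈ Q, l q ∈ D₀) : BuildsWithin T (2 + j) C W := by
  have hblocked := (card_filter_le (S.image l) fun u => ∃ s ∈ S, s(s, u) ∈ W).trans card_image_le
  refine buildsWithin_of_invariant (fun j D W => ∃ S' ⊆ S, #S' = j + 1 ∧ D = (S'.image l)ᶜ ∧
      LeafReady l Δ Q D₀ W₀ S' W) ?_ ?_ j h
      ⟨S, Subset.rfl, hj, rfl, hW, Or.inr (by rw [blocked]; omega)⟩
  · rintro j _ C W h ⟨S', hS', hcard, rfl, hW⟩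
    have hl' : IsLeafMap T (S' ∪ Q) l := hl.mono (union_subset_union_left hS')
    obtain ⟨v, hv, u, hu, u', hu', hne, hvu, hvu', hnext, hnext'⟩ := hW.exists_offer h hl'
      (hSQ.mono_left hS') hdeg (by omega) hW₀ ((union_subset_union_left hS').trans hD₀)
      fun s hs => hlS s (hS' hs)
    have hvl : v ∉ S'.image l := fun hvl => by
      obtain ⟨s, hs, rfl⟩ := mem_image.1 hvl
      exact hl'.notMem s (mem_union_left _ hs) (mem_union_left _ hv)
    have hcard' : #(S'.erase v) = j + 1 := by rw [card_erase_of_mem hv, hcard, Nat.add_sub_cancel]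
    have hcompl : insert (l v) (S'.image l)ᶜ = ((S'.erase v).image l)ᶜ := by
      rw [(hl'.mono subset_union_left).image_erase hv, compl_erase]
    have hsub : S'.erase v ⊆ S := (erase_subset v S').trans hS'
    exact ⟨v, mem_compl.2 hvl, l v, notMem_compl.2 (mem_image_of_mem l hv),
      hl'.adj v (mem_union_left _ hv), u, notMem_compl.2 hu, u', notMem_compl.2 hu', hne, hvu, hvu',
      ⟨_, hsub, hcard', hcompl, hnext⟩, ⟨_, hsub, hcard', hcompl, hnext'⟩⟩
  · rintro _ C W h ⟨S', hS', hcard, rfl, hW⟩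
    obtain ⟨p, rfl⟩ := card_eq_one.1 hcard
    have hpS := singleton_subset_iff.1 hS'
    have hb : blocked W _ _ = ∅ := hW.blocked_le.resolve_right (by rw [card_singleton]; omega)
    rw [image_singleton, compl_singleton] at h
    refine h.buildsWithin_two_of_leaf (Q := Q) hT (hl.mono (by grind))
      (disjoint_left.1 hSQ hpS) hQ ?_ ?_ fun q hq => ?_
    · exact fun a ha b hb =>
        hW.agrees.eq_of_mem hW₀ (hlS p hpS) (mem_union_right _ ha) (mem_union_right _ hb)
    · simpa [blocked] using hb
    · exact hW.agrees.notMem hW₀ (by simp) (hD₀ (mem_union_left _ hpS)) (hlQ q hq)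

/-- The vertex set `C` is a branch of `T` at `v`: it is left by edges only at `v`. -/
structure IsBranch (T : SimpleGraph V) (v : V) (C : Finset V) : Prop where
  mem : v ∈ C
  mem_of_adj : ∀ x ∈ C, x ≠ v → ∀ z, T.Adj x z → z ∈ C

omit [Fintype V] [DecidableRel T.Adj] in
theorem IsBranch.growsTo_sdiff {B L : Finset V} {v : V} (hB : IsBranch T v B) (hT : T.Connected)
    (hL : ∀ x ∈ L, ∀ y z, T.Adj x y → T.Adj x z → z = y) : GrowsTo T {v} (B \ L) := by
  refine growsTo_of_connected hT (singleton_nonempty v) fun x hx y hy hxy => ?_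
  have hyB := (mem_sdiff.1 hy).1
  by_cases hxL : x ∈ L
  · exact Or.inr fun z => hL x hxL y z hxy
  · refine Or.inl (mem_singleton.2 (by_contra fun hyv => hx ?_))
    exact mem_sdiff.2 ⟨hB.mem_of_adj y hyB hyv x hxy.symm, hxL⟩

theorem buildsWithin_of_branch (hT : T.IsTree) (hdeg : ∀ v, T.degree v ≤ Δ) {B : Finset V} {v : V}
    (hB : IsBranch T v B) (hcard : 2 * #B ≤ Fintype.card V) (hl : IsLeafMap T A l)
    (hA : #A = 2 * Δ + 6) (hAB : A ⊆ B.erase v) (hlv : ∀ a ∈ A, l a ≠ v) :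
    BuildsWithin T (Fintype.card V) ∅ ∅ := by
  obtain ⟨S, hSA, hS⟩ := exists_subset_card_eq (show 2 * Δ + 3 ≤ #A by omega)
  have hSQ : S ∪ (A \ S) = A := union_sdiff_of_subset hSA
  have hQ := card_sdiff_add_card_eq_card hSA
  have hadj : ∀ a ∈ A, ∀ z, T.Adj a z → z ∈ B := fun a ha z haz =>
    have ha := mem_erase.1 (hAB ha)
    hB.mem_of_adj a ha.2 ha.1 z haz
  set L := S.image l
  have hL : #L = 2 * Δ + 3 := by rw [card_image_of_injOn (hl.mono hSA).injOn, hS]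
  have hleaf : ∀ x ∈ L, ∀ y z, T.Adj x y → T.Adj x z → z = y := fun x hx y z =>
    (hl.mono hSA).eq_of_adj_of_adj hx
  have hv : v ∈ B \ L := mem_sdiff.2 ⟨hB.mem, fun hvL => by
    obtain ⟨s, hs, hsv⟩ := mem_image.1 hvL
    exact hlv s (hSA hs) hsv⟩
  have hAD : A ⊆ B \ L :=
    subset_sdiff.2 ⟨hAB.trans (erase_subset v B), hl.disjoint_image hSA⟩
  have hDL : B \ L ⊆ Lᶜ := fun x hx => mem_compl.2 (mem_sdiff.1 hx).2
  have hgrow : GrowsTo T (B \ L) Lᶜ := growsTo_of_connected hT.connected ⟨v, hv⟩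
    fun x hx y _ hxy => Or.inr fun z => hleaf x (notMem_compl.1 hx) y z hxy
  have hn : Fintype.card V = 2 + (2 * Δ + 2) + (#Lᶜ - #(B \ L)) + (#(B \ L) - #{v}) := by
    have hLcard := card_add_card_compl L
    have hD₀ := card_le_card (singleton_subset_iff.2 hv)
    have hDL := card_le_card hDL
    rw [card_singleton] at *
    omega
  rw [hn]
  refine (fresh_singleton v).buildsWithin (isPartialCopy_singleton v)
    (hB.growsTo_sdiff hT.connected hleaf) (singleton_subset_iff.2 hv)
    ((Nat.mul_le_mul_left 2 (card_le_card sdiff_subset)).trans hcard) fun C W h hW => ?_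
  refine h.buildsWithin_of_growsTo hgrow hDL hAD
    (fun a ha y hy hay => mem_sdiff.2 ⟨hadj a ha y hay, mem_compl.1 hy⟩)
    (fun x => by have := hdeg x; have := card_add_card_compl L; omega) fun C W' h hag => ?_
  refine h.buildsWithin_of_leafMap hT (Q := A \ S) (by rwa [hSQ]) disjoint_sdiff (by omega) hdeg
    hS.ge hS (by rwa [hSQ]) hW (by rwa [hSQ])
    (fun s hs hsD => (mem_sdiff.1 hsD).2 (mem_image_of_mem l hs)) fun q hq => ?_
  obtain ⟨hqA, hqS⟩ := mem_sdiff.1 hq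
  exact mem_sdiff.2 ⟨hadj q hqA _ (hl.adj q hqA), hl.apply_notMem_image hSA hqA hqS⟩

end Leaves

/-! ### Leaf parents and bare paths -/

section Branches

variable {V : Type*} {T : SimpleGraph V}

theorem IsBranch.exists_adj {v : V} {C : Finset V} (h : IsBranch T v C) (hT : T.Connected)
    (hC : C ≠ {v}) : ∃ w ∈ C, T.Adj v w := by
  have hgrow : GrowsTo T {v} C :=
    growsTo_of_connected hT (singleton_nonempty v) fun x hx y hy hxy =>
      Or.inl (mem_singleton.2 (by_contra fun hyv => hx (h.mem_of_adj y hy hyv x hxy.symm)))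
  obtain ⟨x, hx, w, hw, -, hvw⟩ := hgrow {v} Subset.rfl
    ((singleton_subset_iff.2 h.mem).ssubset_of_ne hC.symm)
  exact ⟨w, hw, mem_singleton.1 hx ▸ hvw⟩

variable [DecidableEq V]

theorem IsBranch.erase {v w : V} {C : Finset V} (h : IsBranch T v C) (hw : w ∈ C) (hvw : T.Adj v w)
    (hunique : ∀ z ∈ C, T.Adj v z → z = w) : IsBranch T w (C.erase v) where
  mem := mem_erase.2 ⟨hvw.ne', hw⟩
  mem_of_adj x hx hxw z hxz := by
    obtain ⟨hxv, hxC⟩ := mem_erase.1 hx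
    refine mem_erase.2 ⟨?_, h.mem_of_adj x hxC hxv z hxz⟩
    rintro rfl
    exact hxw (hunique x hxC hxz.symm)

theorem IsBranch.exists_split {v w w' : V} {C : Finset V} (h : IsBranch T v C) (hT : T.IsAcyclic)
    (hw : w ∈ C) (hw' : w' ∈ C) (hvw : T.Adj v w) (hvw' : T.Adj v w') (hne : w' ≠ w) :
    ∃ C₁ C₂, C₁ ∪ C₂ = C ∧ C₁ ∩ C₂ = {v} ∧ w ∈ C₁ ∧ w' ∈ C₂ ∧
      IsBranch T v C₁ ∧ IsBranch T v C₂ := by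
  classical
  have hvC := h.mem
  let R x := (T.deleteEdges {s(v, w)}).Reachable w x
  have hRw : R w := .refl w
  have hRv : ¬ R v := fun hwv =>
    SimpleGraph.isBridge_iff.1 (SimpleGraph.isAcyclic_iff_forall_isBridge.1 hT hvw) hwv.symm
  have hR {x z} (hxv : x ≠ v) (hzv : z ≠ v) (hxz : T.Adj x z) (hx : R x) : R z :=
    hx.trans <| SimpleGraph.Adj.reachable <|
      (T.deleteEdges_adj).2 ⟨hxz, by simp [hxv, hzv]⟩
  have hRw' : ¬ R w' := fun hw' => hRv <| hw'.trans <| SimpleGraph.Adj.reachable <|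
    (T.deleteEdges_adj).2 ⟨hvw'.symm, by simp [hne, hvw'.ne']⟩
  refine ⟨insert v {x ∈ C | R x}, {x ∈ C | ¬ R x}, ?_, ?_, by simp [hw, hRw], by simp [hw', hRw'],
    ⟨mem_insert_self _ _, ?_⟩, ⟨by simp [hvC, hRv], ?_⟩⟩
  · rw [insert_union, filter_union_filter_not_eq, insert_eq_of_mem hvC]
  · ext x
    simp only [mem_inter, mem_insert, mem_filter, mem_singleton]
    grind
  · intro x hx hxv z hxz
    obtain ⟨hxC, hRx⟩ := mem_filter.1 (mem_of_mem_insert_of_ne hx hxv)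
    rcases eq_or_ne z v with rfl | hzv
    · exact mem_insert_self _ _
    · exact mem_insert_of_mem (mem_filter.2 ⟨h.mem_of_adj x hxC hxv z hxz, hR hxv hzv hxz hRx⟩)
  · intro x hx hxv z hxz
    obtain ⟨hxC, hRx⟩ := mem_filter.1 hx
    refine mem_filter.2 ⟨h.mem_of_adj x hxC hxv z hxz, fun hRz => hRx ?_⟩
    exact hR (by rintro rfl; exact hRv hRz) hxv hxz.symm hRz

@[elab_as_elim]
theorem IsBranch.induction (hT : T.IsTree) {motive : ∀ v C, IsBranch T v C → Prop}
    (single : ∀ v (h : IsBranch T v {v}), motive v {v} h)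
    (insert : ∀ v w C (h : IsBranch T v (insert v C)) (hw : IsBranch T w C), v ∉ C → T.Adj v w →
      motive w C hw → motive v (insert v C) h)
    (union : ∀ v C₁ C₂ (h : IsBranch T v (C₁ ∪ C₂)) (h₁ : IsBranch T v C₁) (h₂ : IsBranch T v C₂),
      C₁ ∩ C₂ = {v} → motive v C₁ h₁ → motive v C₂ h₂ → motive v (C₁ ∪ C₂) h)
    {v : V} {C : Finset V} (h : IsBranch T v C) : motive v C h := by
  induction C using Finset.strongInduction generalizing v with
  | H C ih =>
    by_cases hC : C = {v}
    · subst hC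
      exact single v h
    obtain ⟨w, hw, hvw⟩ := h.exists_adj hT.connected hC
    by_cases hunique : ∀ z ∈ C, T.Adj v z → z = w
    · have hB := h.erase hw hvw hunique
      have hssub := erase_ssubset h.mem
      have hv := notMem_erase v C
      obtain ⟨D, hD⟩ : ∃ D, C.erase v = D := ⟨_, rfl⟩
      obtain rfl : Insert.insert v D = C := hD ▸ insert_erase h.mem
      rw [hD] at hB hv hssub
      exact insert v w D h hB hv hvw (ih D hssub hB)
    · push Not at hunique
      obtain ⟨w', hw', hvw', hne⟩ := hunique
      obtain ⟨C₁, C₂, rfl, hinter, hw₁, hw₂, h₁, h₂⟩ :=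
        h.exists_split hT.isAcyclic hw hw' hvw hvw' hne
      have hsub₁ : C₁ ⊂ C₁ ∪ C₂ := by
        refine subset_union_left.ssubset_of_ne fun hCC => hvw'.ne' ?_
        exact mem_singleton.1 (hinter ▸ mem_inter.2 ⟨hCC ▸ hw', hw₂⟩)
      have hsub₂ : C₂ ⊂ C₁ ∪ C₂ := by
        refine subset_union_right.ssubset_of_ne fun hCC => hvw.ne' ?_
        exact mem_singleton.1 (hinter ▸ mem_inter.2 ⟨hw₁, hCC ▸ hw⟩)
      exact union v C₁ C₂ h h₁ h₂ hinter (ih C₁ hsub₁ h₁) (ih C₂ hsub₂ h₂)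

omit [DecidableEq V] in
theorem IsBranch.exists_card_le {v : V} {C : Finset V} (h : IsBranch T v C) (hT : T.IsTree)
    {N : ℕ} (hN : 0 < N) (hNC : N ≤ #C) : ∃ w B, IsBranch T w B ∧ N ≤ #B ∧ #B ≤ 2 * N := by
  classical
  induction h using IsBranch.induction hT with
  | single v h => exact ⟨v, {v}, h, hNC, by rw [card_singleton]; omega⟩
  | insert v _ C h _ hv _ ih =>
    by_cases hNC' : N ≤ #C
    · exact ih hNC'
    · exact ⟨v, insert v C, h, hNC, by rw [card_insert_of_notMem hv]; omega⟩
  | union v C₁ C₂ h _ _ _ ih₁ ih₂ =>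
    by_cases hN₁ : N ≤ #C₁
    · exact ih₁ hN₁
    by_cases hN₂ : N ≤ #C₂
    · exact ih₂ hN₂
    · exact ⟨v, C₁ ∪ C₂, h, hNC, (card_union_le C₁ C₂).trans (by omega)⟩

omit [DecidableEq V] in
theorem IsBranch.eq_of_adj {v w x : V} {C : Finset V} (h : IsBranch T w C) (hv : v ∉ C)
    (hx : x ∈ C) (hvx : T.Adj v x) : x = w :=
  by_contra fun hxw => hv (h.mem_of_adj x hx hxw v hvx.symm)

end Branches

section BarePaths

variable {V : Type*} {T : SimpleGraph V}

/-- The first `t + 1` terms of `y` form a path of `T` whose inner vertices have degree two. -/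
structure IsBarePath (T : SimpleGraph V) (y : ℕ → V) (t : ℕ) : Prop where
  adj : ∀ i < t, T.Adj (y i) (y (i + 1))
  eq_of_adj : ∀ i, i + 1 < t → ∀ x, T.Adj (y (i + 1)) x → x = y i ∨ x = y (i + 2)
  injOn : Set.InjOn y (Set.Iic t)

theorem IsBarePath.mono {y : ℕ → V} {s t : ℕ} (h : IsBarePath T y t) (hst : s ≤ t) :
    IsBarePath T y s where
  adj i hi := h.adj i (by omega)
  eq_of_adj i hi := h.eq_of_adj i (by omega)
  injOn := h.injOn.mono (Set.Iic_subset_Iic.2 hst)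

theorem isBarePath_zero (y : ℕ → V) : IsBarePath T y 0 where
  adj i hi := by omega
  eq_of_adj i hi := by omega
  injOn i hi j hj _ := by simp_all

theorem IsBarePath.cons {y : ℕ → V} {t : ℕ} {v : V} (h : IsBarePath T y t) (hv : T.Adj v (y 0))
    (hvy : ∀ i ≤ t, y i ≠ v) (hy : 0 < t → ∀ x, T.Adj (y 0) x → x = v ∨ x = y 1) :
    IsBarePath T (fun i => i.casesOn v y) (t + 1) where
  adj
    | 0, _ => hv
    | i + 1, hi => h.adj i (by omega)
  eq_of_adj
    | 0, hi => hy (by omega)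
    | i + 1, hi => h.eq_of_adj i (by omega)
  injOn
    | 0, _, 0, _, _ => rfl
    | 0, _, j + 1, hj, hij => absurd hij.symm (hvy j (by simpa using hj))
    | i + 1, hi, 0, _, hij => absurd hij (hvy i (by simpa using hi))
    | i + 1, hi, j + 1, hj, hij =>
      congrArg (· + 1) (h.injOn (by simpa using hi) (by simpa using hj) hij)

/-- `l` is a leaf of `T` whose neighbour is `v`. -/
def IsPendant (T : SimpleGraph V) (v l : V) : Prop :=
  T.Adj v l ∧ ∀ z, T.Adj l z → z = v

open scoped Classical in
/-- The leaves in `C` hanging from the root `v` of a branch `C`. -/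
noncomputable def rootLeaves (T : SimpleGraph V) (v : V) (C : Finset V) : Finset V :=
  {l ∈ C | IsPendant T v l}

open scoped Classical in
/-- The neighbours in `C` of the root `v` of a branch `C` that are not leaves. -/
noncomputable def rootStems (T : SimpleGraph V) (v : V) (C : Finset V) : Finset V :=
  {x ∈ C | T.Adj v x ∧ ¬ IsPendant T v x}

theorem mem_rootLeaves {v l : V} {C : Finset V} :
    l ∈ rootLeaves T v C ↔ l ∈ C ∧ IsPendant T v l := by
  simp [rootLeaves]

theorem mem_rootStems {v x : V} {C : Finset V} :
    x ∈ rootStems T v C ↔ x ∈ C ∧ T.Adj v x ∧ ¬ IsPendant T v x := by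
  simp [rootStems]

theorem card_rootLeaves_le [Fintype V] [DecidableRel T.Adj] (v : V) (C : Finset V) :
    #(rootLeaves T v C) ≤ T.degree v := by
  rw [← SimpleGraph.card_neighborFinset_eq_degree]
  exact card_le_card fun l hl => (T.mem_neighborFinset v l).2 (mem_rootLeaves.1 hl).2.1

variable [DecidableEq V]

open scoped Classical in
/-- The non-root vertices of a branch `C` with root `v` that are attached to a leaf in `C`. -/
noncomputable def leafParents (T : SimpleGraph V) (v : V) (C : Finset V) : Finset V :=
  {x ∈ C.erase v | ∃ l ∈ C.erase v, IsPendant T x l}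

theorem mem_leafParents {v x : V} {C : Finset V} :
    x ∈ leafParents T v C ↔ x ∈ C.erase v ∧ ∃ l ∈ C.erase v, IsPendant T x l := by
  simp [leafParents]

theorem card_filter_union_of_inter_eq {p : V → Prop} [DecidablePred p] {v : V} {C₁ C₂ : Finset V}
    (h : C₁ ∩ C₂ = {v}) (hv : ¬ p v) :
    #{x ∈ C₁ ∪ C₂ | p x} = #{x ∈ C₁ | p x} + #{x ∈ C₂ | p x} := by
  rw [filter_union, card_union_of_disjoint]
  refine disjoint_left.2 fun x hx hx' => hv ?_
  have hxv : x = v := mem_singleton.1 (h ▸ mem_inter.2 ⟨(mem_filter.1 hx).1, (mem_filter.1 hx').1⟩)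
  exact hxv ▸ (mem_filter.1 hx).2

theorem card_rootLeaves_union {v : V} {C₁ C₂ : Finset V} (h : C₁ ∩ C₂ = {v}) :
    #(rootLeaves T v (C₁ ∪ C₂)) = #(rootLeaves T v C₁) + #(rootLeaves T v C₂) := by
  classical exact card_filter_union_of_inter_eq h fun hv => T.loopless.irrefl v hv.1

theorem card_rootStems_union {v : V} {C₁ C₂ : Finset V} (h : C₁ ∩ C₂ = {v}) :
    #(rootStems T v (C₁ ∪ C₂)) = #(rootStems T v C₁) + #(rootStems T v C₂) := by
  classical exact card_filter_union_of_inter_eq h fun hv => T.loopless.irrefl v hv.1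

theorem card_leafParents_union_ge {v : V} {C₁ C₂ : Finset V} (h : C₁ ∩ C₂ = {v}) :
    #(leafParents T v C₁) + #(leafParents T v C₂) ≤ #(leafParents T v (C₁ ∪ C₂)) := by
  rw [← card_union_of_disjoint]
  · refine card_le_card fun x hx => ?_
    simp only [mem_union, mem_leafParents, mem_erase] at hx ⊢
    grind
  · refine disjoint_left.2 fun x hx hx' => ?_
    have hxC := mem_erase.1 (mem_leafParents.1 hx).1
    have hxC' := mem_erase.1 (mem_leafParents.1 hx').1
    exact hxC.1 (mem_singleton.1 (h ▸ mem_inter.2 ⟨hxC.2, hxC'.2⟩))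

theorem leafParents_subset_insert {v w : V} {C : Finset V} (hv : v ∉ C) :
    leafParents T w C ⊆ leafParents T v (insert v C) := by
  intro x hx
  rw [mem_leafParents] at hx ⊢
  rw [erase_insert hv]
  exact ⟨mem_of_mem_erase hx.1, hx.2.imp fun l hl => ⟨mem_of_mem_erase hl.1, hl.2⟩⟩

theorem card_leafParents_insert_gt {v w : V} {C : Finset V} (hv : v ∉ C) (hw : w ∈ C)
    (hleaves : (rootLeaves T w C).Nonempty) :
    #(leafParents T w C) < #(leafParents T v (insert v C)) := by
  refine card_lt_card ((ssubset_iff_of_subset (leafParents_subset_insert hv)).2 ⟨w, ?_, ?_⟩)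
  · obtain ⟨l, hl⟩ := hleaves
    rw [mem_leafParents, erase_insert hv]
    exact ⟨hw, l, mem_rootLeaves.1 hl⟩
  · exact fun hw => notMem_erase w C (mem_leafParents.1 hw).1

/-- The inductive bound on a branch `C` whose root `v` has a single neighbour in `C`, which is not a
leaf: the bound improves by the length `t` of a bare path starting at the root. -/
def StemBound (T : SimpleGraph V) (K L : ℕ) (v : V) (C : Finset V) : Prop :=
  ∃ y t, IsBarePath T y t ∧ y 0 = v ∧ (∀ i ≤ t, y i ∈ C) ∧
    #C + 2 * L ≤ K * #(leafParents T v C) + t + 2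

/-- The inductive bound on the size of a branch. -/
def BranchBound (T : SimpleGraph V) (K L : ℕ) (v : V) (C : Finset V) : Prop :=
  #C + L * #(rootStems T v C) ≤ K * #(leafParents T v C) + #(rootLeaves T v C) + 1

variable {K L : ℕ} {v w : V} {C : Finset V}

theorem StemBound.card_add_le (h : StemBound T K L v C) (hno : ∀ y, ¬ IsBarePath T y L) :
    #C + L ≤ K * #(leafParents T v C) + 1 := by
  obtain ⟨y, t, hy, -, -, hC⟩ := h
  have htL : t < L := not_le.1 fun hLt => hno y (hy.mono hLt)
  omega

theorem stemBound_of_card_add_le (hv : v ∈ C) (h : #C + 2 * L ≤ K * #(leafParents T v C) + 2) :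
    StemBound T K L v C :=
  ⟨fun _ => v, 0, isBarePath_zero _, rfl, fun _ _ => hv, h⟩

theorem StemBound.insert (h : StemBound T K L w C) (hB : IsBranch T v (insert v C)) (hv : v ∉ C)
    (hvw : T.Adj v w) (hunique : ∀ x ∈ C, ∀ z ∈ C, T.Adj w x → T.Adj w z → x = z) :
    StemBound T K L v (insert v C) := by
  obtain ⟨y, t, hy, rfl, hyC, hC⟩ := h
  have hyv i (hi : i ≤ t) : y i ≠ v := fun hyv => hv (hyv ▸ hyC i hi)
  refine ⟨fun i => i.casesOn v y, t + 1, hy.cons hvw hyv fun ht x hx => ?_, rfl, ?_, ?_⟩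
  · have hxC := hB.mem_of_adj _ (mem_insert_of_mem (hyC 0 t.zero_le)) (hyv 0 t.zero_le) x hx
    exact (mem_insert.1 hxC).imp_right fun hxC => hunique x hxC _ (hyC 1 ht) hx (hy.adj 0 ht)
  · rintro (_ | i) hi
    · exact mem_insert_self v C
    · exact mem_insert_of_mem (hyC i (by omega))
  · have := Nat.mul_le_mul_left K (card_le_card (leafParents_subset_insert (T := T) (w := y 0) hv))
    rw [card_insert_of_notMem hv]
    omega

theorem stemBound_insert [Fintype V] [DecidableRel T.Adj] (hK : T.degree w + 2 * L ≤ K)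
    (hB : IsBranch T v (insert v C)) (hw : w ∈ C) (hv : v ∉ C) (hvw : T.Adj v w)
    (hleaf : ¬ IsPendant T v w) (hbound : BranchBound T K L w C)
    (hstem : #(rootStems T w C) = 1 → rootLeaves T w C = ∅ → StemBound T K L w C) :
    StemBound T K L v (insert v C) := by
  unfold BranchBound at hbound
  have hparents := Nat.mul_le_mul_left K
    (card_le_card (leafParents_subset_insert (T := T) (w := w) hv))
  obtain hleaves | hleaves := (rootLeaves T w C).eq_empty_or_nonempty
  · rw [hleaves, card_empty] at hbound
    have hmem {x} (hx : x ∈ C) (hwx : T.Adj w x) : x ∈ rootStems T w C :=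
      mem_rootStems.2 ⟨hx, hwx, fun hx' => notMem_empty x (hleaves ▸ mem_rootLeaves.2 ⟨hx, hx'⟩)⟩
    obtain hstems | hstems := le_or_gt #(rootStems T w C) 1
    · have hpos : 0 < #(rootStems T w C) := by
        simp only [IsPendant, hvw, true_and, not_forall] at hleaf
        obtain ⟨z, hwz, hzv⟩ := hleaf
        have hz := hB.mem_of_adj w (mem_insert_of_mem hw) hvw.ne' z hwz
        exact card_pos.2 ⟨z, hmem (mem_of_mem_insert_of_ne hz hzv) hwz⟩
      exact (hstem (by omega) hleaves).insert hB hv hvw fun x hx z hz hwx hwz =>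
        card_le_one.1 hstems x (hmem hx hwx) z (hmem hz hwz)
    · refine stemBound_of_card_add_le (mem_insert_self v C) ?_
      have := Nat.mul_le_mul_left L hstems
      rw [card_insert_of_notMem hv]
      omega
  · refine stemBound_of_card_add_le (mem_insert_self v C) ?_
    have hgain := Nat.mul_le_mul_left K (card_leafParents_insert_gt hv hw hleaves)
    have hdeg := card_rootLeaves_le (T := T) w C
    rw [Nat.succ_eq_add_one, Nat.mul_add] at hgain
    rw [card_insert_of_notMem hv]
    omega

theorem branchBound_insert (hno : ∀ y, ¬ IsBarePath T y L) (hw : IsBranch T w C) (hv : v ∉ C)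
    (h : StemBound T K L v (insert v C)) : BranchBound T K L v (insert v C) := by
  have hstems : #(rootStems T v (insert v C)) ≤ 1 := by
    rw [← card_singleton w]
    refine card_le_card fun x hx => mem_singleton.2 ?_
    obtain ⟨hx, hvx, -⟩ := mem_rootStems.1 hx
    exact hw.eq_of_adj hv (mem_of_mem_insert_of_ne hx hvx.ne') hvx
  have := h.card_add_le hno
  have := Nat.mul_le_mul_left L hstems
  unfold BranchBound
  omega

theorem branchBound_pair (h : IsPendant T v w) : BranchBound T K L v {v, w} := by
  have hstems : rootStems T v {v, w} = ∅ := by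
    refine eq_empty_of_forall_notMem fun x hx => ?_
    obtain ⟨hx, hvx, hxleaf⟩ := mem_rootStems.1 hx
    obtain rfl | hx := mem_insert.1 hx
    · exact T.irrefl hvx
    · exact hxleaf (mem_singleton.1 hx ▸ h)
  have hleaves : 0 < #(rootLeaves T v {v, w}) :=
    card_pos.2 ⟨w, mem_rootLeaves.2 ⟨by simp, h⟩⟩
  have := card_le_two (a := v) (b := w)
  unfold BranchBound
  rw [hstems, card_empty]
  omega

theorem BranchBound.union {C₁ C₂ : Finset V} (h₁ : BranchBound T K L v C₁)
    (h₂ : BranchBound T K L v C₂) (hinter : C₁ ∩ C₂ = {v}) : BranchBound T K L v (C₁ ∪ C₂) := by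
  unfold BranchBound at *
  have hC := card_union_add_card_inter C₁ C₂
  have hparents := Nat.mul_le_mul_left K (card_leafParents_union_ge (T := T) hinter)
  rw [hinter, card_singleton] at hC
  rw [card_rootLeaves_union hinter, card_rootStems_union hinter, Nat.mul_add]
  rw [Nat.mul_add] at hparents
  omega

theorem StemBound.union {C₁ C₂ : Finset V} (h₁ : StemBound T K L v C₁)
    (h₂ : BranchBound T K L v C₂) (hinter : C₁ ∩ C₂ = {v}) (hstems : rootStems T v C₂ = ∅)
    (hleaves : rootLeaves T v C₂ = ∅) : StemBound T K L v (C₁ ∪ C₂) := by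
  obtain ⟨y, t, hy, hyv, hyC, hC₁⟩ := h₁
  refine ⟨y, t, hy, hyv, fun i hi => mem_union_left _ (hyC i hi), ?_⟩
  unfold BranchBound at h₂
  rw [hstems, hleaves, card_empty] at h₂
  have hC := card_union_add_card_inter C₁ C₂
  have hparents := Nat.mul_le_mul_left K (card_leafParents_union_ge (T := T) hinter)
  rw [hinter, card_singleton] at hC
  rw [Nat.mul_add] at hparents
  omega

theorem IsBranch.branchBound [Fintype V] [DecidableRel T.Adj] (h : IsBranch T v C) (hT : T.IsTree)
    (hK : ∀ x, T.degree x + 2 * L ≤ K) (hno : ∀ y, ¬ IsBarePath T y L) :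
    BranchBound T K L v C := by
  suffices H : BranchBound T K L v C ∧
      (#(rootStems T v C) = 1 → rootLeaves T v C = ∅ → StemBound T K L v C) from H.1
  induction h using IsBranch.induction hT with
  | single v =>
    have hstems : rootStems T v {v} = ∅ :=
      eq_empty_of_forall_notMem fun x hx => by
        obtain ⟨hx, hvx, -⟩ := mem_rootStems.1 hx
        exact hvx.ne' (mem_singleton.1 hx)
    simp [BranchBound, hstems]
  | insert v w C hB hw hv hvw ih =>
    by_cases hleaf : IsPendant T v w
    · obtain rfl : C = {w} := by_contra fun hC => by
        obtain ⟨z, hz, hwz⟩ := hw.exists_adj hT.connected hC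
        exact hv (hleaf.2 z hwz ▸ hz)
      refine ⟨branchBound_pair hleaf, fun _ hleaves => ?_⟩
      exact absurd (hleaves ▸ mem_rootLeaves.2 ⟨by simp, hleaf⟩) (notMem_empty w)
    · have hstem := stemBound_insert (hK w) hB hw.mem hv hvw hleaf ih.1 ih.2
      exact ⟨branchBound_insert hno hw hv hstem, fun _ _ => hstem⟩
  | union v C₁ C₂ _ _ _ hinter ih₁ ih₂ =>
    refine ⟨ih₁.1.union ih₂.1 hinter, fun hstems hleaves => ?_⟩
    have hcard := card_rootStems_union (T := T) hinter
    rw [← card_eq_zero, card_rootLeaves_union hinter, Nat.add_eq_zero_iff, card_eq_zero,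
      card_eq_zero] at hleaves
    obtain hstems₁ | hstems₂ : #(rootStems T v C₁) = 0 ∨ #(rootStems T v C₂) = 0 := by omega
    · rw [union_comm]
      exact (ih₂.2 (by omega) hleaves.2).union ih₁.1 (inter_comm C₁ C₂ ▸ hinter)
        (card_eq_zero.1 hstems₁) hleaves.1
    · exact (ih₁.2 (by omega) hleaves.1).union ih₂.1 hinter (card_eq_zero.1 hstems₂) hleaves.2

theorem exists_isBarePath_or_leafParents [Fintype V] [DecidableRel T.Adj] {Δ : ℕ} (hT : T.IsTree)
    (hdeg : ∀ v, T.degree v ≤ Δ) (k : ℕ)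
    (hcard : (Δ + 2 * L) * k + Δ + 2 ≤ Fintype.card V) :
    (∃ y, IsBarePath T y L) ∨ ∃ v C, IsBranch T v C ∧ k < #(leafParents T v C) ∧
      #C ≤ 2 * ((Δ + 2 * L) * k + Δ + 2) := by
  refine or_iff_not_imp_left.2 fun hno => ?_
  obtain ⟨v⟩ := hT.connected.nonempty
  obtain ⟨v, C, hC, hle, hge⟩ := IsBranch.exists_card_le (v := v) (C := univ) ⟨by simp, by simp⟩ hT
    (Nat.succ_pos _) hcard
  have hbound := hC.branchBound hT (fun x => Nat.add_le_add_right (hdeg x) (2 * L))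
    (not_exists.1 hno)
  refine ⟨v, C, hC, not_le.1 fun hk => ?_, hge⟩
  have := (card_rootLeaves_le (T := T) v C).trans (hdeg v)
  have := Nat.mul_le_mul_left (Δ + 2 * L) hk
  unfold BranchBound at hbound
  omega

omit [DecidableEq V] in
theorem IsPendant.eq_or_eq {a b : V} (h : IsPendant T a b) (h' : IsPendant T b a)
    (hT : T.Connected) (x : V) : x = a ∨ x = b := by
  obtain ⟨p⟩ := hT.preconnected a x
  by_contra hx
  obtain ⟨⟨⟨y, z⟩, hyz⟩, -, hy, hz⟩ := p.exists_boundary_dart {a, b} (by simp) (by simpa using hx)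
  simp only [Set.mem_insert_iff, Set.mem_singleton_iff] at hy hz hyz
  obtain rfl | rfl := hy
  · exact hz (Or.inr (h'.2 z hyz))
  · exact hz (Or.inl (h.2 z hyz))

theorem exists_isLeafMap_leafParents (hT : T.Connected) (v : V) (C : Finset V) :
    ∃ l, IsLeafMap T (leafParents T v C) l ∧ ∀ a ∈ leafParents T v C, l a ≠ v := by
  have hparent a (ha : a ∈ leafParents T v C) := (mem_leafParents.1 ha).2
  choose! l hlC hl using hparent
  refine ⟨l, ⟨fun a ha => (hl a ha).1, fun a ha => (hl a ha).2, fun a ha hla => ?_⟩,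
    fun a ha => (mem_erase.1 (hlC a ha)).1⟩
  have hlla : l (l a) = a := (hl a ha).2 _ (hl _ hla).1
  have hback : IsPendant T (l a) a := by simpa only [hlla] using hl _ hla
  have hav := (mem_erase.1 (mem_leafParents.1 ha).1).1
  have hlav := (mem_erase.1 (hlC a ha)).1
  obtain hv | hv := (hl a ha).eq_or_eq hback hT v
  · exact hav hv.symm
  · exact hlav hv.symm

end BarePaths

/-! ### Trees with a long bare path -/

section Rerouting

variable {V : Type*} {T : SimpleGraph V} {y : ℕ → V} {L m : ℕ} {C : Finset (Sym2 V)}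

theorem exists_perm_of_injOn (hy : Set.InjOn y (Set.Iic L)) (σ : Equiv.Perm ℕ)
    (hσ : ∀ i, L < i → σ i = i) :
    ∃ τ : Equiv.Perm V, (∀ i ≤ L, τ (y i) = y (σ i)) ∧ ∀ z, (∀ i ≤ L, z ≠ y i) → τ z = z := by
  let ι : {i // i ≤ L} ↪ V := ⟨fun i => y i, fun i j hij => Subtype.ext (hy i.2 j.2 hij)⟩
  have hp i : σ i ≤ L ↔ i ≤ L := by
    rw [← not_lt, ← not_lt, not_iff_not]
    exact ⟨fun hi => (σ.injective (hσ _ hi)).symm ▸ hi, fun hi => (hσ i hi).symm ▸ hi⟩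
  refine ⟨(σ.subtypePerm hp).viaEmbedding ι, fun i hi => ?_, fun z hz => ?_⟩
  · exact Equiv.Perm.viaEmbedding_apply _ ι ⟨i, hi⟩
  · exact Equiv.Perm.viaEmbedding_apply_of_notMem _ _ _ fun ⟨i, hi⟩ => hz i i.2 hi.symm

/-- The permutation of `ℕ` reversing the interval `[a, b]`. -/
def intervalReversal (a b : ℕ) : Equiv.Perm ℕ :=
  Function.Involutive.toPerm (fun i => if a ≤ i ∧ i ≤ b then a + b - i else i)
    (fun i => by grind)

/-- The permutation of `ℕ` that moves `a` to `b` and shifts the rest of `[a, b]` down by one. -/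
def intervalRotation (a b : ℕ) : Equiv.Perm ℕ where
  toFun i := if i = a ∧ a ≤ b then b else if a < i ∧ i ≤ b then i - 1 else i
  invFun i := if i = b ∧ a ≤ b then a else if a ≤ i ∧ i < b then i + 1 else i
  left_inv i := by grind
  right_inv i := by grind

namespace IsBarePath

theorem eq_of_adj_right (hy : IsBarePath T y L) {i j : ℕ} (hi : i + 2 ≤ L) (hj : j ≤ L)
    (h : T.Adj (y (i + 1)) (y j)) : j = i ∨ j = i + 2 :=
  (hy.eq_of_adj i (by omega) _ h).imp (hy.injOn (by grind) (by grind))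
    (hy.injOn (by grind) (by grind))

theorem containsCopy (hy : IsBarePath T y L) (hm : m + 2 ≤ L) (σ : Equiv.Perm ℕ)
    (hσ : ∀ i, i = 0 ∨ m + 1 < i → σ i = i)
    (hC : ∀ a b, T.Adj a b → a ≠ y (m + 1) → b ≠ y (m + 1) → s(a, b) ∈ C)
    (hpath : ∀ i ≤ m + 1, s(y (σ i), y (σ (i + 1))) ∈ C) : ContainsCopy T C := by
  obtain ⟨τ, hτ, hfix⟩ := exists_perm_of_injOn hy.injOn σ fun i hi => hσ i (by omega)
  have hon i b (hi : i ≤ m) (hb : T.Adj (y (i + 1)) b) : s(τ (y (i + 1)), τ b) ∈ C := by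
    rw [hτ _ (by omega)]
    obtain rfl | rfl := hy.eq_of_adj i (by omega) b hb
    · rw [hτ _ (by omega), Sym2.eq_swap]
      exact hpath i (by omega)
    · rw [hτ _ (by omega)]
      exact hpath (i + 1) (by omega)
  have hoff a (ha : ∀ i ≤ m, a ≠ y (i + 1)) : τ a = a := by
    by_cases haL : ∃ i ≤ L, a = y i
    · obtain ⟨i, hi, rfl⟩ := haL
      rw [hτ i hi, hσ i]
      by_contra! h
      exact ha (i - 1) (by omega) (by rw [Nat.sub_add_cancel (by omega)])
    · exact hfix a (by simpa using haL)
  refine ⟨τ, fun a b hab => ?_⟩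
  by_cases ha : ∃ i ≤ m, a = y (i + 1)
  · obtain ⟨i, hi, rfl⟩ := ha
    exact hon i b hi hab
  by_cases hb : ∃ i ≤ m, b = y (i + 1)
  · obtain ⟨i, hi, rfl⟩ := hb
    rw [Sym2.eq_swap]
    exact hon i a hi hab.symm
  push Not at ha hb
  rw [hoff a ha, hoff b hb]
  exact hC a b hab (ha m le_rfl) (hb m le_rfl)

theorem mk_mem_of_consecutive (hy : IsBarePath T y L) (hm : m + 2 ≤ L)
    (hC : ∀ a b, T.Adj a b → a ≠ y (m + 1) → b ≠ y (m + 1) → s(a, b) ∈ C) {i j : ℕ}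
    (hi : i ≤ m) (hj : j ≤ m) (hij : j = i + 1 ∨ i = j + 1) : s(y i, y j) ∈ C := by
  refine hC _ _ ?_ (hy.injOn.ne (by grind) (by grind) (by omega))
    (hy.injOn.ne (by grind) (by grind) (by omega))
  obtain rfl | rfl := hij
  · exact hy.adj i (by omega)
  · exact (hy.adj j (by omega)).symm

theorem containsCopy_of_reversal (hy : IsBarePath T y L) (hm : m + 2 ≤ L) {k : ℕ} (hk : k < m)
    (hC : ∀ a b, T.Adj a b → a ≠ y (m + 1) → b ≠ y (m + 1) → s(a, b) ∈ C)
    (h₁ : s(y k, y m) ∈ C) (h₂ : s(y (k + 1), y (m + 1)) ∈ C)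
    (h₃ : s(y (m + 1), y (m + 2)) ∈ C) : ContainsCopy T C := by
  refine hy.containsCopy hm (intervalReversal (k + 1) m) (fun i hi => if_neg (by omega)) hC
    fun i hi => ?_
  have hσ i : intervalReversal (k + 1) m i = if k + 1 ≤ i ∧ i ≤ m then k + 1 + m - i else i := rfl
  obtain hik | rfl | ⟨hki, him⟩ | rfl | rfl :
    i < k ∨ i = k ∨ k < i ∧ i < m ∨ i = m ∨ i = m + 1 := by omega
  · rw [hσ, hσ, if_neg (by omega), if_neg (by omega)]
    exact hy.mk_mem_of_consecutive hm hC (by omega) (by omega) (by omega)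
  · simpa [hσ, hk] using h₁
  · rw [hσ, hσ, if_pos (by omega), if_pos (by omega)]
    exact hy.mk_mem_of_consecutive hm hC (by omega) (by omega) (by omega)
  · simpa [hσ, hk] using h₂
  · simpa [hσ] using h₃

theorem containsCopy_of_rotation (hy : IsBarePath T y L) (hm : m + 2 ≤ L) {k : ℕ} (hk : k < m)
    (hC : ∀ a b, T.Adj a b → a ≠ y (m + 1) → b ≠ y (m + 1) → s(a, b) ∈ C)
    (h₁ : s(y k, y (m + 1)) ∈ C) (h₂ : s(y (k + 1), y (m + 1)) ∈ C)
    (h₃ : s(y m, y (m + 2)) ∈ C) : ContainsCopy T C := by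
  refine hy.containsCopy hm (intervalRotation (k + 1) (m + 1))
    (fun i hi => (if_neg (by omega)).trans (if_neg (by omega))) hC fun i hi => ?_
  have hσ i : intervalRotation (k + 1) (m + 1) i =
    if i = k + 1 ∧ k + 1 ≤ m + 1 then m + 1 else if k + 1 < i ∧ i ≤ m + 1 then i - 1 else i := rfl
  obtain hik | rfl | rfl | ⟨hki, him⟩ | rfl :
    i < k ∨ i = k ∨ i = k + 1 ∨ k + 1 < i ∧ i < m + 1 ∨ i = m + 1 := by omega
  · rw [hσ, hσ, if_neg (by omega), if_neg (by omega), if_neg (by omega), if_neg (by omega)]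
    exact hy.mk_mem_of_consecutive hm hC (by omega) (by omega) (by omega)
  · simpa [hσ, hk.le] using h₁
  · rw [Sym2.eq_swap]
    simpa [hσ, hk, hk.le] using h₂
  · rw [hσ, hσ, if_neg (by omega), if_pos (by omega), if_neg (by omega), if_pos (by omega)]
    exact hy.mk_mem_of_consecutive hm hC (by omega) (by omega) (by omega)
  · have hne : m + 1 ≠ k := by omega
    simpa [hσ, hk, hk.ne', hne] using h₃

theorem containsCopy_of_self (hy : IsBarePath T y L) (hm : m + 2 ≤ L)
    (hC : ∀ a b, T.Adj a b → a ≠ y (m + 1) → b ≠ y (m + 1) → s(a, b) ∈ C)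
    (h₁ : s(y m, y (m + 1)) ∈ C) (h₂ : s(y (m + 1), y (m + 2)) ∈ C) : ContainsCopy T C := by
  refine hy.containsCopy hm (Equiv.refl ℕ) (fun _ _ => rfl) hC fun i hi => ?_
  simp only [Equiv.refl_apply]
  obtain him | rfl | rfl : i < m ∨ i = m ∨ i = m + 1 := by omega
  · exact hy.mk_mem_of_consecutive hm hC (by omega) (by omega) (by omega)
  · exact h₁
  · exact h₂

end IsBarePath

end Rerouting

section Endgame

variable {V : Type*} [Fintype V] [DecidableEq V] {T : SimpleGraph V} {y : ℕ → V} {L m : ℕ}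
  {C W : Finset (Sym2 V)}

namespace IsBarePath

omit [Fintype V] [DecidableEq V] in
theorem mk_eq_mk_iff (hy : IsBarePath T y L) {i j i' j' : ℕ} (hi : i ≤ L) (hj : j ≤ L)
    (hi' : i' ≤ L) (hj' : j' ≤ L) :
    s(y i, y j) = s(y i', y j') ↔ i = i' ∧ j = j' ∨ i = j' ∧ j = i' := by
  rw [Sym2.eq_iff, hy.injOn.eq_iff hi hi', hy.injOn.eq_iff hj hj', hy.injOn.eq_iff hi hj',
    hy.injOn.eq_iff hj hi']

omit [Fintype V] in
theorem mk_notMem_insert (hy : IsBarePath T y L) {E : Finset (Sym2 V)} {i j i' j' : ℕ}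
    (hE : s(y i, y j) ∉ E) (hi : i ≤ L := by omega) (hj : j ≤ L := by omega)
    (hi' : i' ≤ L := by omega) (hj' : j' ≤ L := by omega)
    (hne : ¬(i = i' ∧ j = j' ∨ i = j' ∧ j = i') := by omega) :
    s(y i, y j) ∉ insert s(y i', y j') E := by
  rw [mem_insert, hy.mk_eq_mk_iff hi hj hi' hj', not_or]
  exact ⟨hne, hE⟩

theorem offer_pair (hy : IsBarePath T y L) {t : ℕ} (i j i' j' : ℕ) (hC : s(y i, y j) ∉ C)
    (hW : s(y i, y j) ∉ W) (hC' : s(y i', y j') ∉ C) (hW' : s(y i', y j') ∉ W)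
    (win : BuildsWithin T t (insert s(y i, y j) C) (insert s(y i', y j') W))
    (win' : BuildsWithin T t (insert s(y i', y j') C) (insert s(y i, y j) W))
    (hi : i ≤ L := by omega) (hj : j ≤ L := by omega) (hi' : i' ≤ L := by omega)
    (hj' : j' ≤ L := by omega) (hij : i ≠ j := by omega) (hij' : i' ≠ j' := by omega)
    (hne : ¬(i = i' ∧ j = j' ∨ i = j' ∧ j = i') := by omega) : BuildsWithin T (t + 1) C W :=
  BuildsWithin.offer_pair (hy.injOn.ne hi hj hij) (hy.injOn.ne hi' hj' hij')
    (by rwa [Ne, hy.mk_eq_mk_iff hi hj hi' hj']) hC hW hC' hW' win win'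

theorem buildsWithin_two (hy : IsBarePath T y L) (hm : m + 2 ≤ L) {k : ℕ} (hk : k + 2 < m)
    (hC : ∀ a b, s(a, b) ∈ C ↔ T.Adj a b ∧ a ≠ y (m + 1) ∧ b ≠ y (m + 1))
    (hmW : ∀ i ≤ L, s(y m, y i) ∉ W) (hW : s(y (m + 2), y (m + 1)) ∉ W)
    (hkW : s(y k, y (m + 1)) ∉ W) (hkW' : s(y (k + 2), y (m + 1)) ∉ W) :
    BuildsWithin T 2 (insert s(y (k + 1), y (m + 1)) C) W := by
  have hCT {C'} (hsub : C ⊆ C') a b (hab : T.Adj a b) (ha : a ≠ y (m + 1)) (hb : b ≠ y (m + 1)) :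
    s(a, b) ∈ C' := hsub ((hC a b).2 ⟨hab, ha, hb⟩)
  have hu i : s(y i, y (m + 1)) ∉ C := by simp [hC]
  have hym {j} (hj : j ≤ L) (hj₁ : j + 1 ≠ m) (hj₂ : j ≠ m + 1) : s(y m, y j) ∉ C := fun h => by
    obtain ⟨m, rfl⟩ := Nat.exists_eq_add_of_lt (Nat.zero_lt_of_lt hk)
    have := hy.eq_of_adj_right (i := 0 + m) (by omega) hj ((hC _ _).1 h).1
    omega
  refine hy.offer_pair (m + 2) (m + 1) m (m + 2) (hy.mk_notMem_insert (hu _)) hW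
    (hy.mk_notMem_insert (hym (by omega) (by omega) (by omega))) (hmW _ (by omega)) ?_ ?_
  · refine hy.offer_pair m (m + 1) m k (hy.mk_notMem_insert (hy.mk_notMem_insert (hu _)))
      (hy.mk_notMem_insert (hmW _ (by omega))) (hy.mk_notMem_insert (hy.mk_notMem_insert
        (hym (by omega) (by omega) (by omega)))) (hy.mk_notMem_insert (hmW _ (by omega))) ?_ ?_
    · exact .of_win (hy.containsCopy_of_self hm (hCT (by grind)) (by simp)
        (by simp [Sym2.eq_swap]))
    · exact .of_win (hy.containsCopy_of_reversal hm (k := k) (by omega) (hCT (by grind))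
        (by simp [Sym2.eq_swap]) (by simp) (by simp [Sym2.eq_swap]))
  · refine hy.offer_pair k (m + 1) (k + 2) (m + 1)
      (hy.mk_notMem_insert (hy.mk_notMem_insert (hu _))) (hy.mk_notMem_insert hkW)
      (hy.mk_notMem_insert (hy.mk_notMem_insert (hu _))) (hy.mk_notMem_insert hkW') ?_ ?_
    · exact .of_win (hy.containsCopy_of_rotation hm (k := k) (by omega) (hCT (by grind))
        (by simp) (by simp) (by simp [Sym2.eq_swap]))
    · exact .of_win (hy.containsCopy_of_rotation hm (k := k + 1) (by omega) (hCT (by grind))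
        (by simp) (by simp) (by simp [Sym2.eq_swap]))

omit [Fintype V] [DecidableEq V] in
theorem exists_clean_blocks {u : V} (hunique : ∀ i j, 1 ≤ i → i ≤ 9 → 1 ≤ j → j ≤ 9 →
      s(y i, u) ∈ W → s(y j, u) ∈ W → i = j) :
    ∃ k i, 1 ≤ k ∧ k + 2 < i ∧ i + 2 ≤ 9 ∧
      ∀ j, k ≤ j ∧ j ≤ k + 2 ∨ i ≤ j ∧ j ≤ i + 2 → s(y j, u) ∉ W := by
  by_cases h : ∃ j, 1 ≤ j ∧ j ≤ 9 ∧ s(y j, u) ∈ W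
  · obtain ⟨j, hj, hj', hjW⟩ := h
    have hclean i (hi : 1 ≤ i) (hi' : i ≤ 9) (hij : i ≠ j) : s(y i, u) ∉ W := fun hiW =>
      hij (hunique i j hi hi' hj hj' hiW hjW)
    obtain hj | hj | hj : j ≤ 3 ∨ 4 ≤ j ∧ j ≤ 6 ∨ 7 ≤ j := by omega
    · exact ⟨4, 7, by omega, by omega, by omega,
        fun l hl => hclean l (by omega) (by omega) (by omega)⟩
    · exact ⟨1, 7, by omega, by omega, by omega,
        fun l hl => hclean l (by omega) (by omega) (by omega)⟩
    · exact ⟨1, 4, by omega, by omega, by omega,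
        fun l hl => hclean l (by omega) (by omega) (by omega)⟩
  · exact ⟨1, 4, by grind⟩

theorem buildsWithin_three (hy : IsBarePath T y L) (hL : 12 ≤ L)
    (hC : ∀ a b, s(a, b) ∈ C ↔ T.Adj a b ∧ a ≠ y 11 ∧ b ≠ y 11)
    (hmW : ∀ a, s(y 10, a) ∉ W) (hW : s(y 12, y 11) ∉ W)
    (hunique : ∀ i j, 1 ≤ i → i ≤ 9 → 1 ≤ j → j ≤ 9 →
      s(y i, y 11) ∈ W → s(y j, y 11) ∈ W → i = j) : BuildsWithin T 3 C W := by
  obtain ⟨k, i, hk, hki, hi, hclean⟩ := exists_clean_blocks hunique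
  have htwo j l (hj : 1 ≤ j ∧ j ≤ 7) (hl : l ≤ 9) (hne : j ≠ l ∧ j + 2 ≠ l)
      (hjW : s(y j, y 11) ∉ W) (hjW' : s(y (j + 2), y 11) ∉ W) :
      BuildsWithin T 2 (insert s(y (j + 1), y 11) C) (insert s(y l, y 11) W) := by
    exact hy.buildsWithin_two (m := 10) hL (by omega) hC
      (fun i _ => hy.mk_notMem_insert (hmW _)) (hy.mk_notMem_insert hW)
      (hy.mk_notMem_insert hjW) (hy.mk_notMem_insert hjW')
  have hkW := hclean k (by omega)
  have hkW' := hclean (k + 2) (by omega)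
  have hiW := hclean i (by omega)
  have hiW' := hclean (i + 2) (by omega)
  exact hy.offer_pair (k + 1) 11 (i + 1) 11 (by simp [hC]) (hclean _ (by omega)) (by simp [hC])
    (hclean _ (by omega)) (htwo k (i + 1) (by omega) (by omega) (by omega) hkW hkW')
    (htwo i (k + 1) (by omega) (by omega) (by omega) hiW hiW')

end IsBarePath

end Endgame

section Gap

variable {V : Type*} [Fintype V] [DecidableEq V] {T : SimpleGraph V} {y : ℕ → V} {L : ℕ}

/-- All vertices except the vertices `y a, …, y b` of the path `y`. -/
def offSegment (y : ℕ → V) (a b : ℕ) : Finset V :=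
  ((Icc a b).image y)ᶜ

theorem offSegment_self (y : ℕ → V) (a : ℕ) : offSegment y a a = univ.erase (y a) := by
  rw [offSegment, Icc_self, image_singleton, compl_singleton]

theorem mem_offSegment {a b : ℕ} {x : V} :
    x ∈ offSegment y a b ↔ ∀ i, a ≤ i → i ≤ b → x ≠ y i := by
  simp [offSegment, eq_comm]

namespace IsBarePath

theorem mem_offSegment (hy : IsBarePath T y L) {a b i : ℕ} (hb : b ≤ L) (hi : i ≤ L) :
    y i ∈ offSegment y a b ↔ i < a ∨ b < i := by
  rw [_root_.mem_offSegment]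
  refine ⟨fun h => ?_, fun h j hj hjb => hy.injOn.ne hi (hjb.trans hb) (by omega)⟩
  by_contra! hi'
  exact h i hi'.1 hi'.2 rfl

theorem card_offSegment (hy : IsBarePath T y L) {a b : ℕ} (hb : b ≤ L) :
    b + 1 - a + #(offSegment y a b) = Fintype.card V := by
  rw [← Nat.card_Icc, ← card_image_of_injOn (hy.injOn.mono (by grind)), offSegment,
    card_add_card_compl]

theorem insert_offSegment (hy : IsBarePath T y L) {a b : ℕ} (hb : b < L) :
    insert (y (b + 1)) (offSegment y a (b + 1)) = offSegment y a b := by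
  have hb' : y (b + 1) ∈ offSegment y a b := (hy.mem_offSegment hb.le hb).2 (by omega)
  ext x
  simp only [mem_insert, _root_.mem_offSegment] at hb' ⊢
  grind

variable [DecidableRel T.Adj] {ρ t : ℕ} {D₀ S : Finset V} {C W W₀ : Finset (Sym2 V)}

theorem buildsWithin_of_gap (hy : IsBarePath T y L) {a j : ℕ} (haj : a + j < L)
    (h : IsPartialCopy T ρ (offSegment y a (a + j)) C W) (hagree : AgreesAt S D₀ W W₀)
    (hS : S ⊆ D₀) (hSy : ∀ i ≤ L, a ≤ i → y i ∉ S) (hD₀ : D₀ ⊆ offSegment y a (a + j))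
    (hfree : #{u | u ∉ offSegment y a (a + j) ∧ s(y (a + j + 1), u) ∈ W} ≤ j - 1)
    (final : ∀ C W', IsPartialCopy T ρ (univ.erase (y a)) C W' → AgreesAt S D₀ W' W₀ →
      s(y (a + 1), y a) ∉ W' → BuildsWithin T t C W') :
    BuildsWithin T (t + j) C W := by
  refine buildsWithin_of_invariant (fun j D W' => a + j < L ∧ D = offSegment y a (a + j) ∧
      D₀ ⊆ D ∧ AgreesAt S D₀ W' W₀ ∧ #{u | u ∉ D ∧ s(y (a + j + 1), u) ∈ W'} ≤ j - 1) ?_ ?_ j h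
    ⟨haj, rfl, hD₀, hagree, hfree⟩
  · rintro j D C W' h ⟨haj, hD, hD₀, hagree, hfree⟩
    have hcard := hy.card_offSegment (a := a) haj.le
    rw [← hD] at hcard
    have hx : y (a + (j + 1) + 1) ∈ D := hD ▸ (hy.mem_offSegment haj.le haj).2 (by omega)
    have hx' : y (a + (j + 1)) ∉ D := fun hmem => by
      have := (hy.mem_offSegment haj.le haj.le).1 (hD ▸ hmem)
      omega
    obtain ⟨u, hu, u', hu', hne, hxu, hxu'⟩ := exists_free_pair (D := D) (W := W')
      (x := y (a + (j + 1) + 1)) (by omega)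
    have hins : insert (y (a + (j + 1))) D = offSegment y a (a + j) :=
      hD ▸ hy.insert_offSegment (b := a + j) (by omega)
    have hxy := (hy.adj (a + (j + 1)) haj).symm
    have hagree' {v v' : V} (hv : v ∉ D) (hv' : v' ∉ D) :=
      hagree.next (hS.trans hD₀) hD₀ (hSy _ haj (by omega)) hx' hv hv'
    have hfree' {v} (v' : V) (hv : v ∉ D) :=
      (h.card_touched_nextWaiter_self (u' := v') hx hx' hv).trans_le (Nat.zero_le (j - 1))
    have hD₀' := hD₀.trans (subset_insert (y (a + (j + 1))) D)
    exact ⟨_, hx, _, hx', hxy, u, hu, u', hu', hne, hxu, hxu',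
      ⟨by omega, hins, hD₀', hagree' hu hu', hfree' u' hu⟩,
      ⟨by omega, hins, hD₀', hagree' hu' hu, hfree' u hu'⟩⟩
  · rintro D C W' h ⟨-, rfl, -, hagree, hfree⟩
    rw [add_zero, offSegment_self] at h hfree
    refine final C W' h hagree fun hW => ?_
    rw [Nat.le_zero, card_eq_zero, filter_eq_empty_iff] at hfree
    exact hfree (mem_univ (y a)) ⟨notMem_erase _ _, hW⟩

end IsBarePath

end Gap

section BarePathStrategy

variable {V : Type*} [Fintype V] [DecidableEq V] {T : SimpleGraph V} [DecidableRel T.Adj]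
  {y : ℕ → V} {L Δ ρ t : ℕ} {D : Finset V} {C W W₀ : Finset (Sym2 V)}

omit [Fintype V] in
theorem notMem_nextWaiter_of_untouched {x z u u' : V} (hx : x ∈ D) (hu : u ∉ D) (hne : u ≠ u')
    (huW : ∀ a, s(a, u) ∉ W) (a : V) : s(z, a) ∉ nextWaiter W x z u u' := by
  have hux : u ≠ x := fun hux => hu (hux ▸ hx)
  rw [mk_mem_nextWaiter, Equiv.swap_apply_left, Sym2.eq_iff, Sym2.eq_swap]
  simp [hux, hne, huW]

namespace IsBarePath

omit [Fintype V] [DecidableRel T.Adj] in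
theorem card_image_range (hy : IsBarePath T y L) {k : ℕ} (hk : k ≤ L + 1) :
    #((range k).image y) = k := by
  rw [card_image_of_injOn (hy.injOn.mono (by grind)), card_range]

omit [Fintype V] [DecidableRel T.Adj] in
theorem notMem_image_range (hy : IsBarePath T y L) {i k : ℕ} (hki : k ≤ i) (hi : i ≤ L) :
    y i ∉ (range k).image y := by
  simp only [mem_image, mem_range, not_exists, not_and]
  exact fun l hl => hy.injOn.ne (by grind) hi (by omega)

theorem buildsWithin_of_prefix (hy : IsBarePath T y L) {k : ℕ} (hk : k ≤ L)
    (hcard : 2 * (k + 1) ≤ Fintype.card V)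
    (final : ∀ C W, IsPartialCopy T 1 ((range (k + 1)).image y) C W →
      Fresh ((range (k + 1)).image y) W → (∀ a, s(y k, a) ∉ W) → BuildsWithin T t C W) :
    BuildsWithin T (t + k) ∅ ∅ := by
  refine buildsWithin_of_invariant (fun j D W => ∃ i, i + j = k ∧ D = (range (i + 1)).image y ∧
    Fresh D W ∧ ∀ a, s(y i, a) ∉ W) ?_ ?_ k (isPartialCopy_singleton (y 0))
    ⟨0, zero_add k, by simp, fresh_singleton _, by simp⟩
  · rintro j D C W h ⟨i, hij, hD, hW, -⟩
    have hDcard : #D = i + 1 := hD ▸ hy.card_image_range (by omega)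
    have hx : y i ∈ D := hD ▸ mem_image_of_mem y (self_mem_range_succ i)
    have hx' : y (i + 1) ∉ D := hD ▸ hy.notMem_image_range le_rfl (by omega)
    obtain ⟨u, hu, u', hu', hne, huW, hu'W⟩ := h.exists_untouched_pair hW.card_le (by omega)
    have hins : insert (y (i + 1)) D = (range (i + 1 + 1)).image y := by
      rw [hD, range_add_one (n := i + 1), image_insert]
    exact ⟨_, hx, _, hx', hy.adj i (by omega), u, hu, u', hu', hne, huW _, hu'W _,
      ⟨i + 1, by omega, hins, hW.next hx hx' hu hu' hne huW hu'W,
        notMem_nextWaiter_of_untouched hx hu hne huW⟩,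
      ⟨i + 1, by omega, hins, hW.next hx hx' hu' hu hne.symm hu'W huW,
        notMem_nextWaiter_of_untouched hx hu' hne.symm hu'W⟩⟩
  · rintro D C W h ⟨i, rfl, rfl, hW, hi⟩
    exact final C W h hW hi

omit [DecidableRel T.Adj] in
theorem growsTo_offSegment (hy : IsBarePath T y L) (hT : T.Connected) {a b : ℕ} (ha : 1 ≤ a)
    (hb : b < L) {D : Finset V} (haD : y (a - 1) ∈ D) (hbD : y (b + 1) ∈ D) :
    GrowsTo T D (offSegment y a b) := by
  refine growsTo_of_connected hT ⟨_, haD⟩ fun x hx z hz hxz => Or.inl ?_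
  obtain ⟨i, hai, hib, rfl⟩ : ∃ i, a ≤ i ∧ i ≤ b ∧ x = y i := by
    simpa [_root_.mem_offSegment] using hx
  obtain ⟨i, rfl⟩ := Nat.exists_eq_add_of_le' (ha.trans hai)
  obtain rfl | rfl := hy.eq_of_adj i (by omega) z hxz
  · have := (hy.mem_offSegment hb.le (by omega)).1 hz
    rwa [show i = a - 1 by omega]
  · have := (hy.mem_offSegment hb.le (by omega)).1 hz
    rwa [show i + 2 = b + 1 by omega]

omit [DecidableEq V] in
theorem two_le_degree (hy : IsBarePath T y L) {i : ℕ} (hi : i + 2 ≤ L) :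
    2 ≤ T.degree (y (i + 1)) := by
  have hne : y i ≠ y (i + 2) := hy.injOn.ne (by grind) hi (by omega)
  classical
  rw [← card_pair hne, ← T.card_neighborFinset_eq_degree]
  refine card_le_card ?_
  simp only [insert_subset_iff, singleton_subset_iff, SimpleGraph.mem_neighborFinset]
  exact ⟨(hy.adj i (by omega)).symm, hy.adj (i + 1) (by omega)⟩

theorem buildsWithin_three_of_agreesAt (hy : IsBarePath T y L) (hT : T.IsTree) (hL : 12 ≤ L)
    (h : IsPartialCopy T 2 (univ.erase (y 11)) C W) (hW₀ : Fresh ((range 11).image y) W₀)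
    (h10 : ∀ a, s(y 10, a) ∉ W₀)
    (hagree : AgreesAt ((Icc 1 10).image y) ((range 11).image y) W W₀)
    (hW : s(y 12, y 11) ∉ W) : BuildsWithin T 3 C W := by
  have hmem {i} (hi : 1 ≤ i) (hi' : i ≤ 10) : y i ∈ (Icc 1 10).image y :=
    mem_image_of_mem y (mem_Icc.2 ⟨hi, hi'⟩)
  refine hy.buildsWithin_three hL (fun a b => ⟨fun hab => ?_, fun hab => ?_⟩) (fun a => ?_) hW
    fun i j hi hi' hj hj' hiW hjW => ?_
  · obtain ⟨hadj, ha⟩ := h.subforest a b hab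
    exact ⟨hadj, ne_of_mem_erase ha, ne_of_mem_erase (h.mem_right hab)⟩
  · exact h.mem_of_adj_of_ne hT (hy.two_le_degree (i := 10) hL) hab.1 hab.2.1 hab.2.2
  · obtain ⟨τ, -, hτ⟩ := hagree
    rw [hτ _ (hmem (by omega) le_rfl)]
    exact h10 (τ a)
  · refine hy.injOn (by grind) (by grind) (hagree.eq_of_mem hW₀
      (hy.notMem_image_range le_rfl (by omega)) (hmem hi ?_) (hmem hj ?_) hiW hjW) <;> omega

theorem buildsWithin_of_offSegment (hy : IsBarePath T y (Δ + 14)) (hT : T.IsTree)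
    (hdeg : ∀ v, T.degree v ≤ Δ) (h : IsPartialCopy T 2 (offSegment y 11 (11 + (Δ + 2))) C W)
    (hW₀ : Fresh ((range 11).image y) W₀) (h10 : ∀ a, s(y 10, a) ∉ W₀)
    (hagree : AgreesAt ((Icc 1 10).image y) ((range 11).image y) W W₀) :
    BuildsWithin T (3 + (Δ + 2)) C W := by
  have hS : (Icc 1 10).image y ⊆ (range 11).image y := image_subset_image (by grind)
  have hD₀ : (range 11).image y ⊆ offSegment y 11 (11 + (Δ + 2)) := image_subset_iff.2 fun i hi =>
    (hy.mem_offSegment (by omega) (by grind)).2 (by grind)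
  have hfree : #{u | u ∉ offSegment y 11 (11 + (Δ + 2)) ∧ s(y (11 + (Δ + 2) + 1), u) ∈ W} ≤ Δ :=
    (h.card_touched_le ((hy.mem_offSegment (by omega) (by omega)).2 (by omega))).trans (hdeg _)
  exact hy.buildsWithin_of_gap (by omega) h hagree hS
    (fun i hi hi' hiS => hy.notMem_image_range hi' hi (hS hiS)) hD₀ (by omega)
    fun C W' h hagree => hy.buildsWithin_three_of_agreesAt hT (by omega) h hW₀ h10 hagree

omit [DecidableRel T.Adj] in
theorem mem_image_range_of_adj (hy : IsBarePath T y L) {k b i : ℕ}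
    (hkb : k + 1 ≤ b) (hb : b ≤ L) (hi : i ∈ Icc 1 k) {z : V} (hz : z ∈ offSegment y (k + 1) b)
    (hadj : T.Adj (y i) z) : z ∈ (range (k + 1)).image y := by
  obtain ⟨hi, hik⟩ := mem_Icc.1 hi
  obtain ⟨i, rfl⟩ := Nat.exists_eq_add_of_le' hi
  obtain rfl | rfl := hy.eq_of_adj i (by omega) z hadj
  · exact mem_image_of_mem y (mem_range.2 (by omega))
  · have := (hy.mem_offSegment hb (by omega)).1 hz
    exact mem_image_of_mem y (mem_range.2 (by omega))

theorem buildsWithin_of_image_range (hy : IsBarePath T y L) (hT : T.Connected) {k b : ℕ}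
    (hb : b < L) (hdeg : ∀ v, T.degree v + k + 1 ≤ b)
    (h : IsPartialCopy T ρ ((range (k + 1)).image y) C W)
    (final : ∀ C W', IsPartialCopy T (ρ + 1) (offSegment y (k + 1) b) C W' →
      AgreesAt ((Icc 1 k).image y) ((range (k + 1)).image y) W' W → BuildsWithin T t C W') :
    BuildsWithin T (t + (Fintype.card V - (b + 2))) C W := by
  have hkb : k + 1 ≤ b := by
    have := hdeg (y 0)
    omega
  have hb_notMem : y (b + 1) ∉ (range (k + 1)).image y := hy.notMem_image_range (by omega) hb
  have hX {i} (hi : i ≤ b + 1) : y i ∈ offSegment y (k + 1) b ↔ i < k + 1 ∨ b < i :=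
    hy.mem_offSegment hb.le (hi.trans hb)
  have hsub : insert (y (b + 1)) ((range (k + 1)).image y) ⊆ offSegment y (k + 1) b :=
    insert_subset ((hX le_rfl).2 (by omega))
      (image_subset_iff.2 fun i hi => (hX (by grind)).2 (by grind))
  have hgrow : GrowsTo T (insert (y (b + 1)) ((range (k + 1)).image y)) (offSegment y (k + 1) b) :=
    hy.growsTo_offSegment hT (by omega) hb
      (mem_insert_of_mem (mem_image_of_mem y (by simp))) (mem_insert_self _ _)
  have hcardX := hy.card_offSegment (a := k + 1) hb.le
  have hcardD : #(insert (y (b + 1)) ((range (k + 1)).image y)) = k + 2 := by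
    rw [card_insert_of_notMem hb_notMem, hy.card_image_range (by omega)]
  have hS : (Icc 1 k).image y ⊆ insert (y (b + 1)) ((range (k + 1)).image y) :=
    (image_subset_image (by grind)).trans (subset_insert _ _)
  have hSX : ∀ s ∈ (Icc 1 k).image y, ∀ z ∈ offSegment y (k + 1) b, T.Adj s z →
      z ∈ insert (y (b + 1)) ((range (k + 1)).image y) := forall_mem_image.2 fun i hi z hz hadj =>
    mem_insert_of_mem (hy.mem_image_range_of_adj hkb hb.le hi hz hadj)
  have hdegX x : #(offSegment y (k + 1) b) + T.degree x + 1 ≤ Fintype.card V := by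
    have := hdeg x
    omega
  rw [show Fintype.card V - (b + 2) = #(offSegment y (k + 1) b) -
    #(insert (y (b + 1)) ((range (k + 1)).image y)) by omega]
  exact (h.insert_free hb_notMem).buildsWithin_of_growsTo hgrow hsub hS hSX hdegX
    fun C W' h hagree => final C W' h (hagree.mono Subset.rfl (subset_insert _ _))

end IsBarePath

theorem buildsWithin_of_isBarePath (hT : T.IsTree) (hdeg : ∀ v, T.degree v ≤ Δ)
    (hy : IsBarePath T y (Δ + 14)) (hcard : Δ + 22 ≤ Fintype.card V) :
    BuildsWithin T (Fintype.card V) ∅ ∅ := by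
  rw [show Fintype.card V = 3 + (Δ + 2) + (Fintype.card V - (11 + (Δ + 2) + 2)) + 10 by omega]
  refine hy.buildsWithin_of_prefix (k := 10) (by omega) (by omega) fun C W h hW h10 => ?_
  refine hy.buildsWithin_of_image_range hT.1 (by omega) (fun v => ?_) h
    fun C W' h hagree => hy.buildsWithin_of_offSegment hT hdeg h hW h10 hagree
  have := hdeg v
  omega

end BarePathStrategy

/-! ### The two bounds -/

theorem buildsWithin_card {V : Type*} [Fintype V] [DecidableEq V] {T : SimpleGraph V}
    [DecidableRel T.Adj] {Δ : ℕ} (hT : T.IsTree) (hdeg : ∀ v, T.degree v ≤ Δ)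
    (hcard : 4 * ((Δ + 2 * (Δ + 14)) * (2 * Δ + 5) + Δ + 2) ≤ Fintype.card V) :
    BuildsWithin T (Fintype.card V) ∅ ∅ := by
  obtain ⟨y, hy⟩ | ⟨v, B, hB, hparents, hBcard⟩ :=
    exists_isBarePath_or_leafParents (L := Δ + 14) hT hdeg (2 * Δ + 5) (by omega)
  · exact buildsWithin_of_isBarePath hT hdeg hy (by nlinarith)
  · obtain ⟨A, hA, hAcard⟩ := exists_subset_card_eq (show 2 * Δ + 6 ≤ _ from hparents)
    obtain ⟨l, hl, hlv⟩ := exists_isLeafMap_leafParents hT.connected v B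
    exact buildsWithin_of_branch hT hdeg hB (by omega) (hl.mono hA) hAcard
      (fun a ha => (mem_leafParents.1 (hA ha)).1) fun a ha => hlv a (hA ha)

theorem le_tauWC {X : Type*} [DecidableEq X] {board : Finset X} {F : Set (Finset X)} {b m t : ℕ}
    (hF : ∀ A ∈ F, m ≤ #A) (h : WaiterWins board b (fun C _ => ∃ A ∈ F, A ⊆ C) t ∅ ∅) :
    m ≤ tauWC board F b := by
  have hne : {t | WaiterWins board b (fun C _ => ∃ A ∈ F, A ⊆ C) t ∅ ∅}.Nonempty := ⟨t, h⟩
  obtain ⟨A, hA, hcard⟩ := WaiterWins.exists_card_le (Nat.sInf_mem hne)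
  rw [card_empty, zero_add] at hcard
  exact (hF A hA).trans hcard

theorem le_natSqrt_div_of_le_mul_sqrt {d n : ℕ} (hd : (d : ℝ) ≤ 1 / 100 * Real.sqrt n) :
    d ≤ n.sqrt / 100 := by
  have hle : ((d * 100 : ℕ) : ℝ) ≤ Real.sqrt n := by
    push_cast
    linarith
  rw [Nat.le_div_iff_mul_le (by norm_num), Nat.le_sqrt']
  exact_mod_cast (Real.le_sqrt (Nat.cast_nonneg _) (Nat.cast_nonneg _)).1 hle

theorem four_mul_branch_size_le {n Δ : ℕ} (hn : 10000 ≤ n) (hΔ : (Δ * 100) ^ 2 ≤ n) :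
    4 * ((Δ + 2 * (Δ + 14)) * (2 * Δ + 5) + Δ + 2) ≤ n := by
  nlinarith [sq_nonneg ((Δ : ℤ) - 1)]

/-- There is `ε > 0` such that for every large enough `n` and every spanning tree `T` of `K_n`
with maximum degree at most `ε·√n`, in the unbiased Waiter-Client game whose winning sets are
the copies of `T` in `K_n`, we have `n − 1 ≤ τ_WC(F_T, 1) ≤ n`. -/
theorem WC_spanning_tree :
    ∃ ε : ℝ, 0 < ε ∧ ∃ n₀ : ℕ, ∀ n : ℕ, n₀ ≤ n →
      ∀ T : SimpleGraph (Fin n), T.IsTree →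
        (∀ v : Fin n, ((T.neighborSet v).ncard : ℝ) ≤ ε * Real.sqrt n) →
        n - 1 ≤ tauWC (Kedges n) (copiesFamily n T.edgeSet) 1 ∧
        tauWC (Kedges n) (copiesFamily n T.edgeSet) 1 ≤ n := by
  refine ⟨1 / 100, by norm_num, 10000, fun n hn T hT hdeg => ?_⟩
  classical
  have hdeg' v : T.degree v ≤ n.sqrt / 100 := le_natSqrt_div_of_le_mul_sqrt <| by
    simpa [← SimpleGraph.coe_neighborFinset, Set.ncard_coe_finset] using hdeg v
  have hΔ : (n.sqrt / 100 * 100) ^ 2 ≤ n := Nat.le_sqrt'.1 (Nat.div_mul_le_self _ _)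
  have hbuild : BuildsWithin T n ∅ ∅ := by
    simpa using buildsWithin_card hT hdeg' (by simpa using four_mul_branch_size_le hn hΔ)
  have hwin : WaiterWins (Kedges n) 1 (fun C _ => ∃ A ∈ copiesFamily n T.edgeSet, A ⊆ C) n ∅ ∅ :=
    hbuild.mono fun C _ => ContainsCopy.exists_mem_copiesFamily
  exact ⟨le_tauWC (fun A hA => (card_of_mem_copiesFamily hT hA).ge) hwin, Nat.sInf_le hwin⟩
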